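/- Every binary code of length 15 with exactly 256 codewords and minimum distance 5 is completely transitive. (In particular, the punctured Nordstrom-Robinson code is completely transitive.) -/

import Mathlib

open Set

/-- Distance from a vertex to a code in the binary Hamming space. -/
noncomputable def distToCode {m : ℕ} (C : Set (Fin m → ZMod 2)) (x : Fin m → ZMod 2) : ℕ :=
  sInf {d | ∃ c ∈ C, hammingDist x c = d}

/-- `C` has minimum distance `δ`. -/
def IsMinDist {m : ℕ} (C : Set (Fin m → ZMod 2)) (δ : ℕ) : Prop :=
  (∀ x ∈ C, ∀ y ∈ C, x ≠ y → δ ≤ hammingDist x y) ∧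
  ∃ x ∈ C, ∃ y ∈ C, x ≠ y ∧ hammingDist x y = δ

/-- `C` is completely regular: the number of codewords at distance `k` from `γ`
depends only on `distToCode C γ` and `k`. -/
def IsCompletelyRegular {m : ℕ} (C : Set (Fin m → ZMod 2)) : Prop :=
  ∀ γ γ' : Fin m → ZMod 2, distToCode C γ = distToCode C γ' →
    ∀ k : ℕ, {c ∈ C | hammingDist γ c = k}.ncard = {c ∈ C | hammingDist γ' c = k}.ncard

/-- A permutation of `F_2^m` is an automorphism of the Hamming graph iff it has
the form `x ↦ (x ∘ σ⁻¹) + v` for a coordinate permutation `σ` and `v ∈ F_2^m`. -/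
def IsHammingAut {m : ℕ} (f : Equiv.Perm (Fin m → ZMod 2)) : Prop :=
  ∃ (σ : Equiv.Perm (Fin m)) (v : Fin m → ZMod 2),
    ∀ x : Fin m → ZMod 2, f x = (fun i => x (σ.symm i)) + v

/-- `C` is completely transitive: some group `X` of Hamming-graph automorphisms
preserving `C` has each cell of the distance partition as a single orbit. -/
def IsCompletelyTransitive {m : ℕ} (C : Set (Fin m → ZMod 2)) : Prop :=
  ∃ X : Subgroup (Equiv.Perm (Fin m → ZMod 2)),
    (∀ g ∈ X, IsHammingAut g ∧ ⇑g '' C = C) ∧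
    ∀ i : ℕ, ∀ x : Fin m → ZMod 2, distToCode C x = i →
      {y | distToCode C y = i} = {y | ∃ g ∈ X, g x = y}


/-!
Extending a `(15, 256, 5)` code by a parity bit gives a `(16, 256, 6)` code with even distances. The
linear programming bound for these parameters is tight, so that every translate of such a code has
vanishing character sums at all sets of at most four coordinates. The resulting identities for the
moments of the distances to an arbitrary word have three consequences: the covering radius of the
punctured code is at most three, the code is closed under complements, and translation by a codeword
at distance `8` from the codeword `0` preserves the code.

These translations contain a `[16, 4]` simplex code extended by a zero coordinate, which identifies
the coordinates with the points of `F₂⁴` and the code with a union of eight cosets of the first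
order Reed-Muller code. The distances force the coset representatives to be quadratic forms that
differ by nondegenerate forms, that is, a Kerdock set. Up to a shear it is unique, whence the code
has a fixed normal form, and the identification with `F₂⁴` may be chosen with prescribed values at
`none` and at up to three further independent coordinates.

Finally, let `x` be a word and `c` a nearest codeword. The support of `x + c` has at most three
elements, and if there are three of them they are dependent, as otherwise there would be a closer
codeword. Hence this support can be moved to a standard position that depends on the distance only,
and two words at the same distance are related by an isomorphism of the normal forms.
-/
namespace NordstromRobinson

section Signs

variable {ι : Type*}

/-- The nontrivial character `(-1)ᵃ` of `ZMod 2`. -/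
def sgn : AddChar (ZMod 2) ℤ := AddChar.zmodChar 2 (by norm_num : (-1 : ℤ) ^ 2 = 1)

lemma sgn_one : sgn 1 = -1 := by decide

lemma sgn_sq (a : ZMod 2) : sgn a ^ 2 = 1 := by revert a; decide

lemma sgn_eq_one_sub (a : ZMod 2) : sgn a = 1 - 2 * if a ≠ 0 then 1 else 0 := by
  revert a; decide

/-- The character of `F_2^ι` attached to a set `S` of coordinates. -/
def character (S : Finset ι) (z : ι → ZMod 2) : ℤ := ∏ i ∈ S, sgn (z i)

lemma character_empty (z : ι → ZMod 2) : character ∅ z = 1 := Finset.prod_empty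

lemma character_add (S : Finset ι) (x y : ι → ZMod 2) :
    character S (x + y) = character S x * character S y := by
  simp only [character, Pi.add_apply, AddChar.map_add_eq_mul, Finset.prod_mul_distrib]

lemma character_sq (S : Finset ι) (z : ι → ZMod 2) : character S z ^ 2 = 1 := by
  simp only [character, ← Finset.prod_pow, sgn_sq, Finset.prod_const_one]

lemma character_symmDiff [DecidableEq ι] (S S' : Finset ι) (z : ι → ZMod 2) :
    character (symmDiff S S') z = character S z * character S' z := by
  have hS := Finset.prod_inter_mul_prod_sdiff S S' fun i => sgn (z i)
  have hS' := Finset.prod_inter_mul_prod_sdiff S' S fun i => sgn (z i)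
  have hsq := character_sq (S ∩ S') z
  have hdiff : Disjoint (S \ S') (S' \ S) := disjoint_sdiff_sdiff
  rw [Finset.inter_comm] at hS'
  rw [character, Finset.symmDiff_def, Finset.prod_union hdiff, character, character, ← hS, ← hS']
  rw [character] at hsq
  linear_combination (-(∏ i ∈ S \ S', sgn (z i)) * ∏ i ∈ S' \ S, sgn (z i)) * hsq

variable [Fintype ι]

/-- The sum of the signs `(-1)^(z i)`, that is, the length minus twice the weight of `z`. -/
def signSum (z : ι → ZMod 2) : ℤ := ∑ i, sgn (z i)

lemma signSum_eq_card_sub (z : ι → ZMod 2) :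
    signSum z = Fintype.card ι - 2 * hammingNorm z := by
  simp only [signSum, sgn_eq_one_sub, Finset.sum_sub_distrib, ← Finset.mul_sum, hammingNorm,
    Finset.sum_boole, Finset.sum_const, Finset.card_univ, nsmul_eq_mul, mul_one]

lemma hammingDist_eq_hammingNorm_add (x y : ι → ZMod 2) :
    hammingDist x y = hammingNorm (x + y) := by
  rw [hammingDist_eq_hammingNorm, ZModModule.neg_eq_self]

lemma signSum_add_eq_card_sub (x y : ι → ZMod 2) :
    signSum (x + y) = Fintype.card ι - 2 * hammingDist x y := by
  rw [signSum_eq_card_sub, hammingDist_eq_hammingNorm_add]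

lemma signSum_add_one (z : ι → ZMod 2) : signSum (z + 1) = -signSum z := by
  simp only [signSum, Pi.add_apply, Pi.one_apply, AddChar.map_add_eq_mul, sgn_one,
    mul_neg_one, Finset.sum_neg_distrib]

lemma signSum_eq_card_iff {z : ι → ZMod 2} : signSum z = Fintype.card ι ↔ z = 0 := by
  rw [signSum_eq_card_sub, ← hammingNorm_eq_zero]; omega

lemma signSum_zero : signSum (0 : ι → ZMod 2) = Fintype.card ι := signSum_eq_card_iff.2 rfl

lemma signSum_le_card (z : ι → ZMod 2) : signSum z ≤ Fintype.card ι := by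
  rw [signSum_eq_card_sub]; omega

lemma neg_card_le_signSum (z : ι → ZMod 2) : -(Fintype.card ι : ℤ) ≤ signSum z := by
  have := signSum_le_card (z + 1)
  rw [signSum_add_one] at this
  omega

lemma signSum_comp_equiv {κ : Type*} [Fintype κ] (φ : ι ≃ κ) (z : κ → ZMod 2) :
    signSum (z ∘ φ) = signSum z :=
  Equiv.sum_comp φ fun k => sgn (z k)

lemma eight_dvd_signSum_add_pairs (a b c d : ι → ZMod 2) :
    (8 : ℤ) ∣ signSum (a + b + c + d) + (signSum (a + b) + signSum (a + c) + signSum (a + d) +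
      signSum (b + c) + signSum (b + d) + signSum (c + d)) + Fintype.card ι := by
  have hpoint : ∀ p q r s : ZMod 2, (8 : ℤ) ∣ sgn (p + q + r + s) +
      (sgn (p + q) + sgn (p + r) + sgn (p + s) + sgn (q + r) + sgn (q + s) + sgn (r + s)) + 1 := by
    decide
  have hsum := Finset.dvd_sum fun i (_ : i ∈ Finset.univ) => hpoint (a i) (b i) (c i) (d i)
  simpa only [signSum, Pi.add_apply, Finset.sum_add_distrib, Finset.sum_const, Finset.card_univ,
    nsmul_eq_mul, mul_one] using hsum

/-- The elementary symmetric function of degree `k` in the signs of `z`. -/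
def signEsymm (k : ℕ) (z : ι → ZMod 2) : ℤ :=
  ∑ S ∈ Finset.powersetCard k Finset.univ, character S z

lemma signEsymm_zero (z : ι → ZMod 2) : signEsymm 0 z = 1 := by
  simp only [signEsymm, Finset.powersetCard_zero, Finset.sum_singleton, character_empty]

lemma sum_sgn_pow (k : ℕ) (z : ι → ZMod 2) :
    ∑ i, sgn (z i) ^ k = if Even k then (Fintype.card ι : ℤ) else signSum z := by
  split_ifs with hk
  · obtain ⟨l, rfl⟩ := hk.two_dvd
    simp [pow_mul, sgn_sq]
  · obtain ⟨l, rfl⟩ := Nat.not_even_iff_odd.1 hk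
    simp [pow_succ, pow_mul, sgn_sq, signSum]

lemma mul_signEsymm (k : ℕ) (z : ι → ZMod 2) : k * signEsymm k z = (-1) ^ (k + 1) *
    ∑ j ∈ Finset.range k, (-1) ^ j * signEsymm j z *
      if Even (k - j) then (Fintype.card ι : ℤ) else signSum z := by
  have hnewton := MvPolynomial.mul_esymm_eq_sum ι ℤ k
  rw [Finset.sum_filter, Finset.Nat.sum_antidiagonal_eq_sum_range_succ_mk, Finset.sum_range_succ,
    if_neg (lt_irrefl _), add_zero,
    Finset.sum_congr rfl fun j hj => if_pos (Finset.mem_range.1 hj)] at hnewton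
  have haeval : ∀ j, MvPolynomial.aeval (fun i => sgn (z i)) (MvPolynomial.esymm ι ℤ j) =
      signEsymm j z := fun j => by
    simp only [MvPolynomial.esymm, signEsymm, character, map_sum, map_prod, MvPolynomial.aeval_X]
  simpa only [map_mul, map_pow, map_neg, map_one, map_sum, map_natCast, haeval,
    MvPolynomial.psum, MvPolynomial.aeval_X, sum_sgn_pow] using
    congrArg (MvPolynomial.aeval fun i => sgn (z i)) hnewton

lemma signEsymm_one (z : ι → ZMod 2) : signEsymm 1 z = signSum z := by
  have h := mul_signEsymm 1 z
  simpa [signEsymm_zero] using h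

lemma two_mul_signEsymm_two (z : ι → ZMod 2) :
    2 * signEsymm 2 z = signSum z ^ 2 - Fintype.card ι := by
  have h := mul_signEsymm 2 z
  norm_num [Finset.sum_range_succ, signEsymm_zero, signEsymm_one] at h
  linear_combination h

lemma six_mul_signEsymm_three (z : ι → ZMod 2) :
    6 * signEsymm 3 z = signSum z ^ 3 - (3 * Fintype.card ι - 2) * signSum z := by
  have h := mul_signEsymm 3 z
  norm_num [Finset.sum_range_succ, signEsymm_zero, signEsymm_one,
    show ¬ Even 3 by decide] at h
  linear_combination 2 * h + signSum z * two_mul_signEsymm_two z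

lemma twentyFour_mul_signEsymm_four (z : ι → ZMod 2) :
    24 * signEsymm 4 z = signSum z ^ 4 - (6 * Fintype.card ι - 8) * signSum z ^ 2 +
      3 * Fintype.card ι ^ 2 - 6 * Fintype.card ι := by
  have h := mul_signEsymm 4 z
  norm_num [Finset.sum_range_succ, signEsymm_zero, signEsymm_one,
    show ¬ Even 3 by decide, show Even 4 by decide] at h
  linear_combination 6 * h - 3 * (Fintype.card ι : ℤ) * two_mul_signEsymm_two z +
    signSum z * six_mul_signEsymm_three z

end Signs

section LinearProgramming

variable {ι : Type*}

/-- The sum over the code `C` of the character attached to `S`. The numbers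
`∑_{#S = k} (characterSum C S) ^ 2` are the MacWilliams transforms used by Delsarte's method. -/
def characterSum (C : Finset (ι → ZMod 2)) (S : Finset ι) : ℤ := ∑ c ∈ C, character S c

variable [Fintype ι]

lemma sum_sum_signEsymm_add (C : Finset (ι → ZMod 2)) (k : ℕ) :
    ∑ x ∈ C, ∑ y ∈ C, signEsymm k (x + y) =
      ∑ S ∈ Finset.powersetCard k Finset.univ, characterSum C S ^ 2 := by
  simp only [signEsymm, character_add, characterSum, sq, Finset.sum_mul_sum]
  simp_rw [Finset.sum_comm (s := C) (t := Finset.powersetCard k Finset.univ)]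

/-- The extended codes of the theorem: length `16`, `256` words, all distances even and
at least `6`. These are the parameters of the Nordstrom-Robinson code. -/
structure IsNRCode (C : Finset (ι → ZMod 2)) : Prop where
  length : Fintype.card ι = 16
  card : C.card = 256
  six_le_hammingDist : ∀ x ∈ C, ∀ y ∈ C, x ≠ y → 6 ≤ hammingDist x y
  even_hammingDist : ∀ x ∈ C, ∀ y ∈ C, Even (hammingDist x y)

/-- The polynomial used in the linear programming bound. It is nonpositive at the multiples of `4`
in `[-16, 4]`, and its expansion in the `signEsymm k` has positive coefficients. -/
def lpPolynomial (t : ℤ) : ℤ := t * (t + 16) * (t - 4) * (t + 4)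

lemma lpPolynomial_signSum (hι : Fintype.card ι = 16) (z : ι → ZMod 2) :
    lpPolynomial (signSum z) = 24 * signEsymm 4 z + 96 * signEsymm 3 z + 144 * signEsymm 2 z +
      480 * signEsymm 1 z + 480 * signEsymm 0 z := by
  have h4 := twentyFour_mul_signEsymm_four z
  have h3 := six_mul_signEsymm_three z
  have h2 := two_mul_signEsymm_two z
  rw [hι] at h2 h3 h4
  push_cast at h2 h3 h4
  rw [lpPolynomial, signEsymm_zero]
  linear_combination -h4 - 16 * h3 - 72 * h2 - 480 * signEsymm_one z

namespace IsNRCode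

variable {C : Finset (ι → ZMod 2)} {x y : ι → ZMod 2}

lemma signSum_zero (hC : IsNRCode C) : signSum (0 : ι → ZMod 2) = 16 := by
  rw [NordstromRobinson.signSum_zero, hC.length, Nat.cast_ofNat]

lemma signSum_eq_sixteen_iff (hC : IsNRCode C) : signSum (x + y) = 16 ↔ y = x := by
  have h := signSum_eq_card_iff (z := x + y)
  rwa [hC.length, Nat.cast_ofNat, add_eq_zero_iff_neg_eq', ZModModule.neg_eq_self] at h

lemma signSum_eq_neg_sixteen_iff (hC : IsNRCode C) : signSum (x + y) = -16 ↔ y = x + 1 := by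
  rw [← hC.signSum_eq_sixteen_iff, add_right_comm, signSum_add_one, neg_eq_iff_eq_neg]

lemma signSum_one (hC : IsNRCode C) : signSum (1 : ι → ZMod 2) = -16 := by
  rw [← zero_add 1, signSum_add_one, hC.signSum_zero]

lemma four_dvd_signSum (hC : IsNRCode C) (hx : x ∈ C) (hy : y ∈ C) : 4 ∣ signSum (x + y) := by
  obtain ⟨k, hk⟩ := hC.even_hammingDist x hx y hy
  rw [signSum_add_eq_card_sub, hC.length]
  omega

lemma signSum_le_four (hC : IsNRCode C) (hx : x ∈ C) (hy : y ∈ C) (hxy : x ≠ y) :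
    signSum (x + y) ≤ 4 := by
  have := hC.six_le_hammingDist x hx y hy hxy
  rw [signSum_add_eq_card_sub, hC.length]
  omega

lemma lpPolynomial_nonpos (hC : IsNRCode C) (hx : x ∈ C) (hy : y ∈ C) (hxy : x ≠ y) :
    lpPolynomial (signSum (x + y)) ≤ 0 := by
  have hle := hC.signSum_le_four hx hy hxy
  have hge := neg_card_le_signSum (x + y)
  rw [hC.length] at hge
  obtain ⟨k, hk⟩ := hC.four_dvd_signSum hx hy
  rw [hk] at hle hge ⊢
  have hk' : -4 ≤ k ∧ k ≤ 1 := by omega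
  obtain ⟨hk₁, hk₂⟩ := hk'
  interval_cases k <;> norm_num [lpPolynomial]

lemma sum_offDiag_lpPolynomial (hC : IsNRCode C) :
    ∑ p ∈ C.offDiag, lpPolynomial (signSum (p.1 + p.2)) =
      24 * ∑ S ∈ Finset.powersetCard 4 Finset.univ, characterSum C S ^ 2 +
      96 * ∑ S ∈ Finset.powersetCard 3 Finset.univ, characterSum C S ^ 2 +
      144 * ∑ S ∈ Finset.powersetCard 2 Finset.univ, characterSum C S ^ 2 +
      480 * ∑ S ∈ Finset.powersetCard 1 Finset.univ, characterSum C S ^ 2 := by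
  classical
  have hdiag : ∑ p ∈ C.diag, lpPolynomial (signSum (p.1 + p.2)) = 480 * 256 ^ 2 := by
    simp [Finset.sum_diag, ZModModule.add_self, hC.signSum_zero, lpPolynomial, hC.card]
  have htotal : ∑ p ∈ C ×ˢ C, lpPolynomial (signSum (p.1 + p.2)) = _ :=
    Finset.sum_product ..
  have hdegree_zero : ∑ x ∈ C, ∑ y ∈ C, signEsymm 0 (x + y) = 256 ^ 2 := by
    simp [signEsymm_zero, hC.card]
  simp only [lpPolynomial_signSum hC.length, Finset.sum_add_distrib, ← Finset.mul_sum,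
    hdegree_zero] at htotal hdiag ⊢
  simp only [sum_sum_signEsymm_add, ← Finset.diag_union_offDiag,
    Finset.sum_union (Finset.disjoint_diag_offDiag _)] at htotal
  linear_combination htotal - hdiag

lemma sum_offDiag_lpPolynomial_eq_zero (hC : IsNRCode C) :
    ∑ p ∈ C.offDiag, lpPolynomial (signSum (p.1 + p.2)) = 0 := by
  refine le_antisymm (Finset.sum_nonpos fun p hp => ?_) ?_
  · obtain ⟨hx, hy, hxy⟩ := Finset.mem_offDiag.1 hp
    exact hC.lpPolynomial_nonpos hx hy hxy
  · rw [hC.sum_offDiag_lpPolynomial]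
    positivity

lemma characterSum_eq_zero (hC : IsNRCode C) {S : Finset ι} (hS : S.Nonempty) (hS4 : S.card ≤ 4) :
    characterSum C S = 0 := by
  have hsq : ∀ k, 0 ≤ ∑ S ∈ Finset.powersetCard k Finset.univ, characterSum C S ^ 2 :=
    fun k => Finset.sum_nonneg fun S _ => sq_nonneg _
  have hsum := hC.sum_offDiag_lpPolynomial
  rw [hC.sum_offDiag_lpPolynomial_eq_zero] at hsum
  have hcard : ∑ S' ∈ Finset.powersetCard S.card Finset.univ, characterSum C S' ^ 2 = 0 := by
    have := hsq 1
    have := hsq 2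
    have := hsq 3
    have := hsq 4
    have := hS.card_pos
    interval_cases S.card <;> linarith
  exact pow_eq_zero_iff two_ne_zero |>.1 <|
    (Finset.sum_eq_zero_iff_of_nonneg fun S _ => sq_nonneg _).1 hcard S
      (Finset.mem_powersetCard_univ.2 rfl)

lemma signSum_cases (hC : IsNRCode C) (hx : x ∈ C) (hy : y ∈ C) :
    y = x ∨ y = x + 1 ∨ signSum (x + y) = 0 ∨ signSum (x + y) = 4 ∨ signSum (x + y) = -4 := by
  rcases eq_or_ne x y with rfl | hxy
  · exact .inl rfl
  have hzero : lpPolynomial (signSum (x + y)) = 0 :=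
    (Finset.sum_eq_zero_iff_of_nonpos fun p hp => by
      obtain ⟨hx, hy, hxy⟩ := Finset.mem_offDiag.1 hp
      exact hC.lpPolynomial_nonpos hx hy hxy).1 hC.sum_offDiag_lpPolynomial_eq_zero (x, y)
      (Finset.mem_offDiag.2 ⟨hx, hy, hxy⟩)
  simp only [lpPolynomial, mul_eq_zero] at hzero
  rw [← hC.signSum_eq_neg_sixteen_iff]
  omega

end IsNRCode

end LinearProgramming

section Moments

namespace IsNRCode

variable {ι : Type*} [Fintype ι] {C : Finset (ι → ZMod 2)}

lemma sum_signEsymm_add (hC : IsNRCode C) (x : ι → ZMod 2) {k : ℕ} (hk : k ≠ 0) (hk4 : k ≤ 4) :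
    ∑ c ∈ C, signEsymm k (x + c) = 0 := by
  simp only [signEsymm, character_add]
  rw [Finset.sum_comm]
  refine Finset.sum_eq_zero fun S hS => ?_
  obtain rfl := Finset.mem_powersetCard_univ.1 hS
  have hS0 : characterSum C S = 0 :=
    hC.characterSum_eq_zero (Finset.card_ne_zero.1 hk) hk4
  rw [← Finset.mul_sum, ← characterSum, hS0, mul_zero]

lemma sum_signSum_add (hC : IsNRCode C) (x : ι → ZMod 2) : ∑ c ∈ C, signSum (x + c) = 0 := by
  simpa only [signEsymm_one] using hC.sum_signEsymm_add x one_ne_zero (by norm_num)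

lemma sum_signSum_add_sq (hC : IsNRCode C) (x : ι → ZMod 2) :
    ∑ c ∈ C, signSum (x + c) ^ 2 = 256 * 16 := by
  have h := congrArg (2 * ·) (hC.sum_signEsymm_add x two_ne_zero (by norm_num))
  simp only [Finset.mul_sum, two_mul_signEsymm_two, Finset.sum_sub_distrib, Finset.sum_const,
    hC.card, hC.length] at h
  linear_combination h

lemma sum_signSum_add_pow_three (hC : IsNRCode C) (x : ι → ZMod 2) :
    ∑ c ∈ C, signSum (x + c) ^ 3 = 0 := by
  have h := congrArg (6 * ·) (hC.sum_signEsymm_add x three_ne_zero (by norm_num))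
  simp only [Finset.mul_sum, six_mul_signEsymm_three, Finset.sum_sub_distrib] at h
  rw [← Finset.mul_sum, hC.sum_signSum_add] at h
  linear_combination h

lemma sum_signSum_add_pow_four (hC : IsNRCode C) (x : ι → ZMod 2) :
    ∑ c ∈ C, signSum (x + c) ^ 4 = 256 * 736 := by
  have h := congrArg (24 * ·) (hC.sum_signEsymm_add x four_ne_zero le_rfl)
  simp only [Finset.mul_sum, twentyFour_mul_signEsymm_four, Finset.sum_sub_distrib,
    Finset.sum_add_distrib, Finset.sum_const, hC.card, hC.length] at h
  rw [← Finset.mul_sum, hC.sum_signSum_add_sq] at h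
  linear_combination h

lemma characterSum_symmDiff [DecidableEq ι] (hC : IsNRCode C) {S S' : Finset ι}
    (hS : S.card = 2) (hS' : S'.card = 2) :
    characterSum C (symmDiff S S') = if S = S' then 256 else 0 := by
  split_ifs with hSS'
  · simp [hSS', characterSum, character_empty, hC.card]
  · refine hC.characterSum_eq_zero (Finset.nonempty_iff_ne_empty.2 fun h => ?_) ?_
    · exact hSS' (symmDiff_eq_bot.1 h)
    · calc (symmDiff S S').card ≤ (S ∪ S').card :=
            Finset.card_le_card (symmDiff_le_sup (a := S) (b := S'))
        _ ≤ S.card + S'.card := Finset.card_union_le S S'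
        _ = 4 := by rw [hS, hS']

lemma sum_signEsymm_two_mul_signEsymm_two (hC : IsNRCode C) (x y : ι → ZMod 2) :
    ∑ c ∈ C, signEsymm 2 (x + c) * signEsymm 2 (y + c) = 256 * signEsymm 2 (x + y) := by
  classical
  have hexpand : ∀ c, signEsymm 2 (x + c) * signEsymm 2 (y + c) =
      ∑ S ∈ Finset.powersetCard 2 (Finset.univ : Finset ι),
      ∑ S' ∈ Finset.powersetCard 2 (Finset.univ : Finset ι),
        character S x * character S' y * character (symmDiff S S') c := fun c => by
    simp only [signEsymm, Finset.sum_mul_sum, character_add, character_symmDiff]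
    exact Finset.sum_congr rfl fun S _ => Finset.sum_congr rfl fun S' _ => by ring
  simp only [hexpand]
  rw [Finset.sum_comm, signEsymm, Finset.mul_sum]
  refine Finset.sum_congr rfl fun S hS => ?_
  calc ∑ c ∈ C, ∑ S' ∈ Finset.powersetCard 2 Finset.univ,
        character S x * character S' y * character (symmDiff S S') c
      = ∑ S' ∈ Finset.powersetCard 2 Finset.univ,
          character S x * character S' y * if S = S' then 256 else 0 := by
        rw [Finset.sum_comm]
        refine Finset.sum_congr rfl fun S' hS' => ?_
        rw [← Finset.mul_sum, ← characterSum, hC.characterSum_symmDiff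
          (Finset.mem_powersetCard_univ.1 hS) (Finset.mem_powersetCard_univ.1 hS')]
    _ = 256 * character S (x + y) := by
        simp only [mul_ite, mul_zero, Finset.sum_ite_eq, hS, if_true, character_add]
        ring

lemma sum_signSum_sq_mul_signSum_sq (hC : IsNRCode C) (x y : ι → ZMod 2) :
    ∑ c ∈ C, (signSum (x + c) ^ 2 - 16) * (signSum (y + c) ^ 2 - 16) =
      512 * (signSum (x + y) ^ 2 - 16) := by
  have htwo : ∀ z : ι → ZMod 2, signSum z ^ 2 - 16 = 2 * signEsymm 2 z := fun z => by
    rw [two_mul_signEsymm_two, hC.length, Nat.cast_ofNat]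
  simp only [htwo, mul_mul_mul_comm, ← Finset.mul_sum, hC.sum_signEsymm_two_mul_signEsymm_two]
  ring

end IsNRCode

end Moments

section Translations

namespace IsNRCode

variable {ι : Type*} [Fintype ι] {C : Finset (ι → ZMod 2)} {a b c d x y : ι → ZMod 2}

lemma add_one_mem (hC : IsNRCode C) (hc : c ∈ C) : c + 1 ∈ C := by
  by_contra hc1
  have hsum : ∑ d ∈ C, (signSum (c + d) ^ 3 - 16 * signSum (c + d)) = 0 := by
    rw [Finset.sum_sub_distrib, ← Finset.mul_sum, hC.sum_signSum_add_pow_three,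
      hC.sum_signSum_add, mul_zero, sub_zero]
  refine hsum.not_gt <| Finset.sum_pos' (fun d hd => ?_) ⟨c, hc, ?_⟩
  · rcases hC.signSum_cases hc hd with rfl | rfl | h | h | h
    · rw [ZModModule.add_self, hC.signSum_zero]; norm_num
    · exact absurd hd hc1
    all_goals rw [h]; norm_num
  · rw [ZModModule.add_self, hC.signSum_zero]; norm_num

-- If `signSum (x + y) = ± 4`, then the mixed second moment at `x`, `y` is zero, while all its terms
-- are nonnegative and the one at `d` is positive.
lemma eight_dvd_signSum_of_eq_zero (hC : IsNRCode C) (hx : x ∈ C) (hy : y ∈ C) (hd : d ∈ C)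
    (hxd : signSum (x + d) = 0) (hyd : signSum (y + d) = 0) : 8 ∣ signSum (x + y) := by
  by_contra h8
  have hxy : signSum (x + y) ^ 2 = 16 := by
    rcases hC.signSum_cases hx hy with rfl | rfl | h | h | h
    · rw [ZModModule.add_self, hC.signSum_zero] at h8; norm_num at h8
    · rw [hC.signSum_eq_neg_sixteen_iff.2 rfl] at h8; norm_num at h8
    · rw [h] at h8; exact absurd (dvd_zero 8) h8
    all_goals rw [h]; norm_num
  have hsum := hC.sum_signSum_sq_mul_signSum_sq x y
  rw [hxy] at hsum
  refine hsum.not_gt <| Finset.sum_pos' (fun c hc => ?_) ⟨d, hd, by rw [hxd, hyd]; norm_num⟩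
  rcases hC.signSum_cases hx hc with rfl | rfl | hxc | hxc | hxc
  · rw [add_comm y, hxy]; simp
  · rw [← add_assoc y, signSum_add_one, neg_sq, add_comm y, hxy]; simp
  all_goals
    rcases hC.signSum_cases hy hc with rfl | rfl | hyc | hyc | hyc
    · simp [hxy]
    · simp [← add_assoc, signSum_add_one, hxy]
    all_goals simp [hxc, hyc]

lemma eight_dvd_signSum_iff (hC : IsNRCode C) (ha : a ∈ C) (hc : c ∈ C) :
    8 ∣ signSum (a + c) ↔ c = a ∨ c = a + 1 ∨ signSum (a + c) = 0 := by
  rw [← hC.signSum_eq_sixteen_iff, ← hC.signSum_eq_neg_sixteen_iff]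
  have h := hC.signSum_cases ha hc
  rw [← hC.signSum_eq_sixteen_iff, ← hC.signSum_eq_neg_sixteen_iff] at h
  omega

lemma eight_dvd_signSum_trans (hC : IsNRCode C) (ha : a ∈ C) (hb : b ∈ C) (hc : c ∈ C)
    (hab : signSum (a + b) = 0) (hac : 8 ∣ signSum (a + c)) : 8 ∣ signSum (b + c) := by
  rcases (hC.eight_dvd_signSum_iff ha hc).1 hac with rfl | rfl | hac
  · rw [add_comm, hab]; exact dvd_zero 8
  · rw [← add_assoc, signSum_add_one, add_comm b, hab, neg_zero]; exact dvd_zero 8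
  · exact hC.eight_dvd_signSum_of_eq_zero hb hc ha (add_comm a b ▸ hab) (add_comm a c ▸ hac)

lemma eight_dvd_signSum_add_signSum (hC : IsNRCode C) (ha : a ∈ C) (hb : b ∈ C) (hc : c ∈ C)
    (hab : signSum (a + b) = 0) : 8 ∣ signSum (a + c) + signSum (b + c) := by
  have hab' := hC.eight_dvd_signSum_trans ha hb hc hab
  have hba' := hC.eight_dvd_signSum_trans hb ha hc (add_comm a b ▸ hab)
  have ha4 := hC.four_dvd_signSum ha hc
  have hb4 := hC.four_dvd_signSum hb hc
  omega

lemma eight_dvd_signSum_add_add (hC : IsNRCode C) (ha : a ∈ C) (hb : b ∈ C) (hc : c ∈ C)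
    (hd : d ∈ C) (hab : signSum (a + b) = 0) :
    8 ∣ signSum (a + b + c + d) + signSum (c + d) := by
  have h := eight_dvd_signSum_add_pairs a b c d
  have hc8 := hC.eight_dvd_signSum_add_signSum ha hb hc hab
  have hd8 := hC.eight_dvd_signSum_add_signSum ha hb hd hab
  rw [hab, hC.length] at h
  omega

-- The polynomial in `signSum (x + d)` and `signSum (c + d)` below is chosen to vanish at all pairs
-- of values that are possible for `d ∈ C` if `x = a + b + c ∉ C`, except those with
-- `signSum (x + d) = ± 12`, where it is `18432`; but its sum over `C` is `98304`.
lemma add_add_mem (hC : IsNRCode C) (ha : a ∈ C) (hb : b ∈ C) (hc : c ∈ C)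
    (hab : signSum (a + b) = 0) : a + b + c ∈ C := by
  by_contra hx
  have h8 : ∀ d ∈ C, _ := fun d hd => hC.eight_dvd_signSum_add_add ha hb hc hd hab
  have hxc : signSum (a + b + c + c) = 0 := by rw [add_assoc, ZModModule.add_self, add_zero, hab]
  set x := a + b + c
  have htotal : ∑ d ∈ C, (signSum (x + d) ^ 4 - 16 * signSum (x + d) ^ 2 +
      3 * ((signSum (x + d) ^ 2 - 16) * (signSum (c + d) ^ 2 - 16)) +
      48 * (signSum (c + d) ^ 2 - 16)) = 98304 := by
    simp only [Finset.sum_sub_distrib, Finset.sum_add_distrib, ← Finset.mul_sum,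
      hC.sum_signSum_add_pow_four, hC.sum_signSum_add_sq, hC.sum_signSum_sq_mul_signSum_sq, hxc,
      Finset.sum_const, hC.card]
    norm_num
  have hdvd : (18432 : ℤ) ∣ 98304 := by
    rw [← htotal]
    refine Finset.dvd_sum fun d hd => ?_
    have hx16 : signSum (x + d) ≠ 16 := fun h => hx (hC.signSum_eq_sixteen_iff.1 h ▸ hd)
    have hx16' : signSum (x + d) ≠ -16 := fun h => hx <| by
      have := hC.add_one_mem hd
      rwa [hC.signSum_eq_neg_sixteen_iff.1 h, add_assoc, ZModModule.add_self, add_zero] at this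
    have hle := signSum_le_card (x + d)
    have hge := neg_card_le_signSum (x + d)
    rw [hC.length] at hle hge
    have h8d := h8 d hd
    rcases hC.signSum_cases hc hd with rfl | rfl | hcd | hcd | hcd
    · rw [hxc, ZModModule.add_self, hC.signSum_zero]; norm_num
    · rw [← add_assoc, signSum_add_one, hxc, hC.signSum_eq_neg_sixteen_iff.2 rfl]; norm_num
    · have : signSum (x + d) = 0 ∨ signSum (x + d) = 8 ∨ signSum (x + d) = -8 := by omega
      rcases this with h | h | h <;> rw [h, hcd] <;> norm_num
    all_goals
      have : signSum (x + d) = 4 ∨ signSum (x + d) = -4 ∨ signSum (x + d) = 12 ∨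
        signSum (x + d) = -12 := by omega
      rcases this with h | h | h | h <;> rw [h, hcd] <;> norm_num
  norm_num at hdvd

lemma exists_ten_le_signSum (hC : IsNRCode C) (hx : ∀ c ∈ C, signSum (x + c) % 4 = 2) :
    ∃ c ∈ C, 10 ≤ signSum (x + c) := by
  by_contra! hlt
  have htotal : ∑ c ∈ C, (signSum (x + c) ^ 4 - 40 * signSum (x + c) ^ 2 + 144) ≠ 0 := by
    rw [Finset.sum_add_distrib, Finset.sum_sub_distrib, ← Finset.mul_sum,
      hC.sum_signSum_add_pow_four, hC.sum_signSum_add_sq, Finset.sum_const, hC.card]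
    norm_num
  refine htotal (Finset.sum_eq_zero fun c hc => ?_)
  have hlt_compl := hlt _ (hC.add_one_mem hc)
  rw [← add_assoc, signSum_add_one] at hlt_compl
  have hltc := hlt c hc
  have hmod := hx c hc
  have : signSum (x + c) = 2 ∨ signSum (x + c) = -2 ∨ signSum (x + c) = 6 ∨
    signSum (x + c) = -6 := by omega
  rcases this with h | h | h | h <;> rw [h] <;> norm_num

end IsNRCode

end Translations

section Kernel

variable {ι : Type*}

lemma sum_sgn_apply {M : Type*} [AddCommGroup M] [Module (ZMod 2) M] [Fintype M]
    (f : Module.Dual (ZMod 2) M) [Decidable (f = 0)] :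
    ∑ w, sgn (f w) = if f = 0 then (Fintype.card M : ℤ) else 0 := by
  split_ifs with hf
  · simp [hf]
  · have hne : sgn.compAddMonoidHom f.toAddMonoidHom ≠ 0 := by
      obtain ⟨w, hw⟩ := DFunLike.ne_iff.1 hf
      refine DFunLike.ne_iff.2 ⟨w, ?_⟩
      have h1 : f w = 1 := Fin.eq_one_of_ne_zero _ hw
      simp [h1, sgn_one]
    simpa using AddChar.sum_eq_zero_iff_ne_zero.2 hne

/-- The coordinate functional `w ↦ w i` on a space `W` of words. -/
def coordDual (W : Submodule (ZMod 2) (ι → ZMod 2)) (i : ι) : Module.Dual (ZMod 2) W :=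
  LinearMap.proj i ∘ₗ W.subtype

lemma coordDual_apply (W : Submodule (ZMod 2) (ι → ZMod 2)) (i : ι) (w : W) :
    coordDual W i w = w.1 i := rfl

variable [Fintype ι]

lemma coordDual_injective {W : Submodule (ZMod 2) (ι → ZMod 2)}
    (hW : ∀ w ∈ W, w ≠ 0 → signSum w = 0) (hcard : Fintype.card ι ≤ Nat.card W) :
    Function.Injective (coordDual W) := by
  classical
  have := Fintype.ofFinite W
  intro i j hij
  by_contra hne
  have hfiber : (Fintype.card ι : ℤ) =
      Nat.card W * (Finset.univ.filter fun k => coordDual W k = coordDual W i).card := by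
    calc (Fintype.card ι : ℤ) = ∑ w : W, signSum w.1 * sgn (w.1 i) := by
          rw [Finset.sum_eq_single 0 (fun w _ hw => by simp [hW w w.2 (by simpa using hw)])
            (by simp)]
          simp [signSum_zero]
      _ = ∑ k, ∑ w : W, sgn ((coordDual W k + coordDual W i) w) := by
          simp only [signSum, Finset.sum_mul, LinearMap.add_apply, coordDual_apply,
            AddChar.map_add_eq_mul]
          exact Finset.sum_comm
      _ = _ := by
          simp only [sum_sgn_apply, add_eq_zero_iff_eq_neg, ZModModule.neg_eq_self,
            ← Finset.sum_filter, Finset.sum_const, nsmul_eq_mul, Nat.card_eq_fintype_card,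
            mul_comm]
  have htwo : 1 < (Finset.univ.filter fun k => coordDual W k = coordDual W i).card :=
    Finset.one_lt_card.2 ⟨i, by simp, j, by simp [hij], hne⟩
  have hpos : 0 < Fintype.card ι := Fintype.card_pos_iff.2 ⟨i⟩
  norm_cast at hfiber
  nlinarith

lemma coordDual_bijective {W : Submodule (ZMod 2) (ι → ZMod 2)}
    (hW : ∀ w ∈ W, w ≠ 0 → signSum w = 0) (hcard : Fintype.card ι = Nat.card W) :
    Function.Bijective (coordDual W) := by
  have hdual : Nat.card (Module.Dual (ZMod 2) W) = Nat.card W := by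
    rw [Module.natCard_eq_pow_finrank (K := ZMod 2), Subspace.dual_finrank_eq,
      ← Module.natCard_eq_pow_finrank]
  have : Finite (Module.Dual (ZMod 2) W) := Module.finite_of_finite (ZMod 2)
  refine (Nat.bijective_iff_injective_and_card _).2 ⟨coordDual_injective hW hcard.le, ?_⟩
  rw [hdual, Nat.card_eq_fintype_card, hcard]

namespace IsNRCode

variable {C : Finset (ι → ZMod 2)} {c r : ι → ZMod 2}

lemma balanced_add_mem (hC : IsNRCode C) (h0 : 0 ∈ C) (hr : r ∈ C) (hr0 : signSum r = 0)
    (hc : c ∈ C) : r + c ∈ C := by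
  simpa only [zero_add] using hC.add_add_mem h0 hr hc (by rwa [zero_add])

lemma eq_zero_or_signSum_eq_zero (hC : IsNRCode C) (h0 : 0 ∈ C) (hr : r ∈ C)
    (hr8 : 8 ∣ signSum r) {o : ι} (hro : r o = 0) : r = 0 ∨ signSum r = 0 := by
  rcases (hC.eight_dvd_signSum_iff h0 hr).1 (by rwa [zero_add]) with hr | hr | hr
  · exact .inl hr
  · simp [hr] at hro
  · exact .inr (by rwa [zero_add] at hr)

/-- The words of the code `C ∋ 0` that vanish at `o` and whose weight is divisible by four.
Translations by them preserve `C`. -/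
def kernel (hC : IsNRCode C) (h0 : 0 ∈ C) (o : ι) : Submodule (ZMod 2) (ι → ZMod 2) :=
  AddSubgroup.toZModSubmodule 2
    { carrier := {r | r ∈ C ∧ 8 ∣ signSum r ∧ r o = 0}
      zero_mem' := ⟨h0, by rw [hC.signSum_zero]; norm_num, rfl⟩
      add_mem' := by
        rintro r s ⟨hr, hr8, hro⟩ ⟨hs, hs8, hso⟩
        rcases hC.eq_zero_or_signSum_eq_zero h0 hr hr8 hro with rfl | hr0
        · rw [zero_add]; exact ⟨hs, hs8, hso⟩
        · exact ⟨hC.balanced_add_mem h0 hr hr0 hs,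
            hC.eight_dvd_signSum_trans h0 hr hs (by rwa [zero_add]) (by rwa [zero_add]),
            by simp [hro, hso]⟩
      neg_mem' := fun {r} hr => by rwa [ZModModule.neg_eq_self] }

lemma mem_kernel (hC : IsNRCode C) (h0 : 0 ∈ C) {o : ι} :
    r ∈ hC.kernel h0 o ↔ r ∈ C ∧ 8 ∣ signSum r ∧ r o = 0 := Iff.rfl

lemma signSum_eq_zero_of_mem_kernel (hC : IsNRCode C) (h0 : 0 ∈ C) {o : ι}
    (hr : r ∈ hC.kernel h0 o) (hr0 : r ≠ 0) : signSum r = 0 :=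
  (hC.eq_zero_or_signSum_eq_zero h0 hr.1 hr.2.1 hr.2.2).resolve_left hr0

lemma add_mem_of_mem_kernel (hC : IsNRCode C) (h0 : 0 ∈ C) {o : ι}
    (hr : r ∈ hC.kernel h0 o) (hc : c ∈ C) : r + c ∈ C := by
  rcases eq_or_ne r 0 with rfl | hr0
  · rwa [zero_add]
  · exact hC.balanced_add_mem h0 hr.1 (hC.signSum_eq_zero_of_mem_kernel h0 hr hr0) hc

lemma card_filter_eight_dvd (hC : IsNRCode C) (h0 : 0 ∈ C) :
    (C.filter fun c => 8 ∣ signSum c).card = 32 := by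
  classical
  have h01 : (0 : ι → ZMod 2) ≠ 1 := fun h => by
    have hone := hC.signSum_one
    rw [← h, hC.signSum_zero] at hone
    norm_num at hone
  have hterm : ∀ c ∈ C, signSum c ^ 2 - 16 =
      256 * ((if c = 0 then 1 else 0) + if c = 1 then 1 else 0) -
        16 * if 8 ∣ signSum c then 1 else 0 := by
    intro c hc
    rcases hC.signSum_cases h0 hc with rfl | rfl | h | h | h
    · simp [h01, hC.signSum_zero]
    · simp [h01.symm, hC.signSum_one]
    all_goals
      rw [zero_add] at h
      have hc0 : c ≠ 0 := by rintro rfl; simp [hC.signSum_zero] at h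
      have hc1 : c ≠ 1 := by rintro rfl; simp [hC.signSum_one] at h
      simp [h, hc0, hc1]
  have hsum : ∑ c ∈ C, (signSum c ^ 2 - 16) = 0 := by
    have hsq := hC.sum_signSum_add_sq 0
    simp only [zero_add] at hsq
    rw [Finset.sum_sub_distrib, hsq, Finset.sum_const, hC.card]
    norm_num
  have h1 : (1 : ι → ZMod 2) ∈ C := zero_add (1 : ι → ZMod 2) ▸ hC.add_one_mem h0
  rw [Finset.sum_congr rfl hterm, Finset.sum_sub_distrib, ← Finset.mul_sum, ← Finset.mul_sum,
    Finset.sum_add_distrib, Finset.sum_ite_eq', Finset.sum_ite_eq', if_pos h0, if_pos h1,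
    Finset.sum_boole] at hsum
  omega

lemma card_kernel (hC : IsNRCode C) (h0 : 0 ∈ C) (o : ι) : Nat.card (hC.kernel h0 o) = 16 := by
  set K := C.filter fun c => 8 ∣ signSum c
  have hadd_one : ∀ c ∈ K, c + 1 ∈ K := fun c hc => by
    obtain ⟨hc, hc8⟩ := Finset.mem_filter.1 hc
    exact Finset.mem_filter.2 ⟨hC.add_one_mem hc, by rwa [signSum_add_one, dvd_neg]⟩
  have hflip : ∀ t : ZMod 2, t + 1 = 0 ↔ t ≠ 0 := by decide
  have hcompl : (K.filter fun c => c o = 0).card = (K.filter fun c => c o ≠ 0).card := by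
    refine Finset.card_nbij' (· + 1) (· + 1) (fun c hc => ?_) (fun c hc => ?_)
      (fun c _ => by simp [add_assoc, ZModModule.add_self])
      (fun c _ => by simp [add_assoc, ZModModule.add_self])
    all_goals
      simp only [Finset.coe_filter, mem_ofPred_eq, Pi.add_apply, Pi.one_apply, hflip, ne_eq,
        not_not] at hc ⊢
      exact ⟨hadd_one c hc.1, hc.2⟩
  have hK : (K.filter fun c => c o = 0).card + (K.filter fun c => c o ≠ 0).card = 32 := by
    rw [← hC.card_filter_eight_dvd h0]
    exact Finset.card_filter_add_card_filter_not _
  have hkernel : Nat.card (hC.kernel h0 o) = (K.filter fun c => c o = 0).card :=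
    Nat.subtype_card _ fun r => by simp [K, mem_kernel, and_assoc]
  omega

end IsNRCode

end Kernel

section Coordinates

lemma exists_basis_castLE {K V : Type*} [DivisionRing K] [AddCommGroup V] [Module K V]
    [FiniteDimensional K V] {n d : ℕ} (hn : Module.finrank K V = n) (hd : d ≤ n) {v : Fin d → V}
    (hv : LinearIndependent K v) :
    ∃ b : Module.Basis (Fin n) K V, ∀ i, b (Fin.castLE hd i) = v i := by
  let b := Module.Basis.sumExtend hv
  have hb : ∀ i, b (.inl i) = v i := fun i => by
    simp only [b, Module.Basis.sumExtend, Module.Basis.reindex_apply,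
      Module.Basis.extend_apply_self]
    rfl
  have : Finite (Fin d ⊕ Module.Basis.sumExtendIndex hv) := Module.Finite.finite_basis b
  have : Finite (Module.Basis.sumExtendIndex hv) :=
    Finite.of_injective (Sum.inr : _ → Fin d ⊕ _) Sum.inr_injective
  have := Fintype.ofFinite (Module.Basis.sumExtendIndex hv)
  have hcard : Fintype.card (Module.Basis.sumExtendIndex hv) = n - d := by
    have := Module.finrank_eq_card_basis b
    rw [Fintype.card_sum, Fintype.card_fin, hn] at this
    omega
  let e := ((Equiv.refl (Fin d)).sumCongr (Fintype.equivFinOfCardEq hcard)).trans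
    (finSumFinEquiv.trans (finCongr (Nat.add_sub_cancel' hd)))
  refine ⟨b.reindex e, fun i => ?_⟩
  rw [Module.Basis.reindex_apply, ← hb, e.symm_apply_eq.2]
  rfl

namespace IsNRCode

variable {ι : Type*} [Fintype ι] {C : Finset (ι → ZMod 2)}

lemma coordDual_kernel_bijective (hC : IsNRCode C) (h0 : 0 ∈ C) (o : ι) :
    Function.Bijective (coordDual (hC.kernel h0 o)) :=
  coordDual_bijective (fun _ => hC.signSum_eq_zero_of_mem_kernel h0)
    (by rw [hC.length, hC.card_kernel h0 o])

lemma exists_coordinates (hC : IsNRCode C) (h0 : 0 ∈ C) (o : ι) {d : ℕ} (hd : d ≤ 4)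
    {v : Fin d → ι} (hv : LinearIndependent (ZMod 2) (coordDual (hC.kernel h0 o) ∘ v)) :
    ∃ L : Module.Dual (ZMod 2) (hC.kernel h0 o) ≃ₗ[ZMod 2] (Fin 4 → ZMod 2),
      (∀ i, L (coordDual _ (v i)) = Pi.single (Fin.castLE hd i) 1) ∧
        ∀ k, (fun i => L (coordDual _ i) k) ∈ hC.kernel h0 o := by
  set W := hC.kernel h0 o
  have hfinrank : Module.finrank (ZMod 2) (Module.Dual (ZMod 2) W) = 4 := by
    have hcard : Nat.card W = Nat.card (ZMod 2) ^ _ := Module.natCard_eq_pow_finrank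
    rw [hC.card_kernel h0 o, Nat.card_zmod] at hcard
    rw [Subspace.dual_finrank_eq]
    exact (Nat.pow_right_injective le_rfl (hcard : 2 ^ 4 = _)).symm
  obtain ⟨b, hb⟩ := exists_basis_castLE hfinrank hd hv
  refine ⟨b.equivFun, fun i => ?_, fun k => ?_⟩
  · rw [← Function.comp_apply (f := coordDual _), ← hb, Module.Basis.equivFun_apply,
      Module.Basis.repr_self, Finsupp.single_eq_pi_single]
  · obtain ⟨w, hw⟩ := (Module.evalEquiv (ZMod 2) W).surjective (b.coord k)
    convert w.2 with i
    exact (LinearMap.congr_fun hw (coordDual W i)).symm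

end IsNRCode

end Coordinates

section QuadraticForms

open scoped Matrix

/-- The affine function with linear part `b` and constant term `e`. -/
def affineFun (b : Fin 4 → ZMod 2) (e : ZMod 2) (x : Fin 4 → ZMod 2) : ZMod 2 := b ⬝ᵥ x + e

/-- The quadratic form on `F_2^4` with coefficients `a i` at `x i * x 3` and `m i` at the product of
the other two of `x 0`, `x 1`, `x 2`. The Pfaffian of its alternating form is `a ⬝ᵥ m`. -/
def quadForm (a m : Fin 3 → ZMod 2) (x : Fin 4 → ZMod 2) : ZMod 2 :=
  x 3 * (a 0 * x 0 + a 1 * x 1 + a 2 * x 2) +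
    (m 0 * (x 1 * x 2) + m 1 * (x 0 * x 2) + m 2 * (x 0 * x 1))

lemma affineFun_add (b b' : Fin 4 → ZMod 2) (e e' : ZMod 2) :
    affineFun b e + affineFun b' e' = affineFun (b + b') (e + e') := by
  ext x
  simp only [affineFun, Pi.add_apply, add_dotProduct]
  ring

lemma quadForm_add (a a' m m' : Fin 3 → ZMod 2) :
    quadForm a m + quadForm a' m' = quadForm (a + a') (m + m') := by
  ext x
  simp only [quadForm, Pi.add_apply]
  ring

lemma quadForm_zero : quadForm 0 0 = 0 := by
  ext x
  simp [quadForm]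

lemma sum_fin_succ {n : ℕ} {α M : Type*} [Fintype α] [AddCommMonoid M]
    (f : (Fin (n + 1) → α) → M) : ∑ x, f x = ∑ a, ∑ y, f (Fin.cons a y) := by
  rw [← (Fin.consEquiv fun _ => α).sum_comp, Fintype.sum_prod_type]
  rfl

lemma sum_fin_four {α M : Type*} [Fintype α] [AddCommMonoid M] (f : (Fin 4 → α) → M) :
    ∑ x, f x = ∑ p, ∑ q, ∑ r, ∑ s, f ![p, q, r, s] := by
  simp only [sum_fin_succ, Fintype.sum_unique]
  rfl

lemma signSum_fin_four (z : (Fin 4 → ZMod 2) → ZMod 2) :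
    signSum z = ∑ p, ∑ q, ∑ r, ∑ s, sgn (z ![p, q, r, s]) :=
  sum_fin_four _

lemma exists_signSum_quadForm_add_eq_eight {a m : Fin 3 → ZMod 2} (h : a ≠ 0 ∨ m ≠ 0)
    (ham : a ⬝ᵥ m = 0) : ∃ b e, signSum (quadForm a m + affineFun b e) = 8 := by
  simp only [signSum_fin_four]
  revert a m
  decide

-- The coefficients are read off from the values of `c` at the points of weight at most two; the
-- hypotheses then determine its other five values.
lemma exists_eq_quadForm_add_affineFun {c : (Fin 4 → ZMod 2) → ZMod 2} (hc : ∑ x, c x = 0)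
    (hcx : ∀ k, ∑ x, c x * x k = 0) : ∃ a m b e, c = quadForm a m + affineFun b e := by
  refine ⟨![c ![0, 0, 0, 0] + c ![1, 0, 0, 0] + c ![0, 0, 0, 1] + c ![1, 0, 0, 1],
      c ![0, 0, 0, 0] + c ![0, 1, 0, 0] + c ![0, 0, 0, 1] + c ![0, 1, 0, 1],
      c ![0, 0, 0, 0] + c ![0, 0, 1, 0] + c ![0, 0, 0, 1] + c ![0, 0, 1, 1]],
    ![c ![0, 0, 0, 0] + c ![0, 1, 0, 0] + c ![0, 0, 1, 0] + c ![0, 1, 1, 0],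
      c ![0, 0, 0, 0] + c ![1, 0, 0, 0] + c ![0, 0, 1, 0] + c ![1, 0, 1, 0],
      c ![0, 0, 0, 0] + c ![1, 0, 0, 0] + c ![0, 1, 0, 0] + c ![1, 1, 0, 0]],
    ![c ![0, 0, 0, 0] + c ![1, 0, 0, 0], c ![0, 0, 0, 0] + c ![0, 1, 0, 0],
      c ![0, 0, 0, 0] + c ![0, 0, 1, 0], c ![0, 0, 0, 0] + c ![0, 0, 0, 1]],
    c ![0, 0, 0, 0], ?_⟩
  have huniv : (Finset.univ : Finset (ZMod 2)) = {0, 1} := rfl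
  have hc0 := hcx 0
  have hc1 := hcx 1
  have hc2 := hcx 2
  have hc3 := hcx 3
  simp only [sum_fin_four, huniv, Finset.mem_singleton, zero_ne_one, not_false_eq_true,
    Finset.sum_insert, Finset.sum_singleton, Fin.isValue, Matrix.cons_val_zero, mul_zero, add_zero,
    mul_one, zero_add, Matrix.cons_val_one, Matrix.cons_val] at hc hc0 hc1 hc2 hc3
  ext x
  have hx : x = ![x 0, x 1, x 2, x 3] := by ext i; fin_cases i <;> rfl
  have hcases : ∀ t : ZMod 2, t = 0 ∨ t = 1 := by decide
  rw [hx]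
  rcases hcases (x 0) with h0 | h0 <;> rcases hcases (x 1) with h1 | h1 <;>
    rcases hcases (x 2) with h2 | h2 <;> rcases hcases (x 3) with h3 | h3 <;>
    simp [h0, h1, h2, h3, quadForm, affineFun, dotProduct, Fin.sum_univ_four] <;> grind

end QuadraticForms

section KerdockSet

open scoped Matrix

/-- The pairs `p`, `q` of coefficient vectors whose difference is the zero form or nonsingular. -/
def IsKerdockPair (p q : (Fin 3 → ZMod 2) × (Fin 3 → ZMod 2)) : Prop :=
  p = q ∨ (p.1 + q.1) ⬝ᵥ (p.2 + q.2) = 1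

instance : DecidableRel IsKerdockPair := fun p q => inferInstanceAs (Decidable (p = q ∨ _))

/-- The inversion `a ↦ a⁻¹` of the field with eight elements, from the coordinates in a suitable
basis to the coordinates in its trace-dual basis. -/
def inversion (a : Fin 3 → ZMod 2) : Fin 3 → ZMod 2 :=
  ![a 0 + a 1 + a 1 * a 2, a 1 + a 2 + a 0 * a 2, a 2 + a 0 + a 0 * a 1]

set_option maxRecDepth 10000 in
lemma exists_eq_inversion_of_isKerdockPair_single : ∀ m : Fin 3 → Fin 3 → ZMod 2,
    (∀ i, IsKerdockPair 0 (Pi.single i 1, m i)) →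
    (∀ i j, IsKerdockPair (Pi.single i 1, m i) (Pi.single j 1, m j)) →
    ∃ k, ∀ p, IsKerdockPair 0 p → (∀ i, IsKerdockPair (Pi.single i 1, m i) p) →
      p.2 = inversion (p.1 + p.2 ⨯₃ k) := by
  decide

lemma exists_forall_eq_inversion {Q : Finset ((Fin 3 → ZMod 2) × (Fin 3 → ZMod 2))} (h0 : 0 ∈ Q)
    (hQ : ∀ p ∈ Q, ∀ q ∈ Q, IsKerdockPair p q) (hcard : 8 ≤ Q.card) :
    ∃ k, ∀ p ∈ Q, p.2 = inversion (p.1 + p.2 ⨯₃ k) := by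
  have hinj : InjOn Prod.fst (Q : Set ((Fin 3 → ZMod 2) × (Fin 3 → ZMod 2))) :=
    fun p hp q hq hpq => (hQ p hp q hq).resolve_right fun h => by
      simp [hpq, ZModModule.add_self] at h
  have himage : Q.image Prod.fst = Finset.univ := by
    refine Finset.eq_univ_of_card _ (le_antisymm (Finset.card_le_univ _) ?_)
    rw [Finset.card_image_of_injOn hinj]
    simpa using hcard
  have hsurj : ∀ a, ∃ m, (a, m) ∈ Q := fun a => by
    have ha := Finset.mem_univ a
    rw [← himage, Finset.mem_image] at ha
    obtain ⟨⟨_, m⟩, hm, rfl⟩ := ha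
    exact ⟨m, hm⟩
  choose m hm using fun i : Fin 3 => hsurj (Pi.single i 1)
  obtain ⟨k, hk⟩ := exists_eq_inversion_of_isKerdockPair_single m (fun i => hQ _ h0 _ (hm i))
    fun i j => hQ _ (hm i) _ (hm j)
  exact ⟨k, fun p hp => hk p (hQ _ h0 p hp) fun i => hQ _ (hm i) p hp⟩

/-- The transvection along `(k, 0)` with respect to the last coordinate. -/
def shear (k : Fin 3 → ZMod 2) : (Fin 4 → ZMod 2) ≃ₗ[ZMod 2] (Fin 4 → ZMod 2) :=
  LinearEquiv.transvection (f := LinearMap.proj 3) (v := ![k 0, k 1, k 2, 0]) rfl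

lemma shear_apply (k : Fin 3 → ZMod 2) (x : Fin 4 → ZMod 2) :
    shear k x = x + x 3 • ![k 0, k 1, k 2, 0] := rfl

lemma exists_quadForm_comp_shear (a m k : Fin 3 → ZMod 2) :
    ∃ b, quadForm a m ∘ shear k = quadForm (a + m ⨯₃ k) m + affineFun b 0 := by
  refine ⟨![0, 0, 0, a ⬝ᵥ k + m 0 * k 1 * k 2 + m 1 * k 0 * k 2 + m 2 * k 0 * k 1], ?_⟩
  ext x
  have hsq : x 3 * x 3 = x 3 := by generalize x 3 = t; revert t; decide
  have htwo : (2 : ZMod 2) = 0 := rfl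
  simp only [quadForm, affineFun, shear_apply, cross_apply, dotProduct, Fin.sum_univ_three,
    Fin.sum_univ_four, Function.comp_apply, Pi.add_apply, Pi.smul_apply, smul_eq_mul,
    Matrix.cons_val, zero_mul, mul_zero, add_zero, zero_add]
  linear_combination (a 0 * k 0 + a 1 * k 1 + a 2 * k 2 + m 0 * k 1 * k 2 + m 1 * k 0 * k 2 +
    m 2 * k 0 * k 1) * hsq + x 3 * (m 2 * k 1 * x 0 + m 0 * k 2 * x 1 + m 1 * k 0 * x 2) * htwo

lemma exists_affineFun_comp_shear (b : Fin 4 → ZMod 2) (e : ZMod 2) (k : Fin 3 → ZMod 2) :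
    ∃ b', affineFun b e ∘ shear k = affineFun b' e := by
  refine ⟨b + (b ⬝ᵥ ![k 0, k 1, k 2, 0]) • Pi.single 3 1, ?_⟩
  ext x
  simp only [shear_apply, affineFun, Function.comp_apply, add_dotProduct, dotProduct_add,
    dotProduct_smul, smul_dotProduct, single_one_dotProduct, smul_eq_mul]
  ring

end KerdockSet

section NormalForm

open scoped Matrix

/-- A standard model of the Nordstrom-Robinson code: the union of the cosets of the first order
Reed-Muller code that are represented by the Kerdock set of all forms
`quadForm a (inversion a)`. -/
def normalCode : Finset ((Fin 4 → ZMod 2) → ZMod 2) :=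
  Finset.univ.image fun p : (Fin 3 → ZMod 2) × (Fin 4 → ZMod 2) × ZMod 2 =>
    quadForm p.1 (inversion p.1) + affineFun p.2.1 p.2.2

lemma mem_normalCode {c : (Fin 4 → ZMod 2) → ZMod 2} :
    c ∈ normalCode ↔ ∃ a b e, quadForm a (inversion a) + affineFun b e = c := by
  simp [normalCode]

lemma card_normalCode_le : normalCode.card ≤ 256 :=
  Finset.card_image_le.trans_eq (by simp)

lemma hammingDist_comp_equiv {ι κ α : Type*} [Fintype ι] [Fintype κ] [DecidableEq α] (e : ι ≃ κ)
    (x y : κ → α) : hammingDist (x ∘ e) (y ∘ e) = hammingDist x y := by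
  simp only [hammingDist, Function.comp_apply]
  rw [← Finset.card_map e.toEmbedding, Finset.map_filter]
  simp

namespace IsNRCode

section Orthogonality

variable {ι : Type*} [Fintype ι] {C : Finset (ι → ZMod 2)} {c r : ι → ZMod 2}

lemma sum_apply_eq_zero (hC : IsNRCode C) (h0 : 0 ∈ C) (hc : c ∈ C) : ∑ i, c i = 0 := by
  have hval : signSum c = 16 - 2 * ∑ i, ((c i).val : ℤ) := by
    have hpoint : ∀ s : ZMod 2, sgn s = 1 - 2 * s.val := by decide
    simp [signSum, hpoint, Finset.sum_sub_distrib, Finset.mul_sum, hC.length]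
  have h4 := hC.four_dvd_signSum h0 hc
  rw [zero_add, hval] at h4
  have h2 : (2 : ℤ) ∣ ∑ i, ((c i).val : ℤ) := by omega
  simpa using (ZMod.intCast_zmod_eq_zero_iff_dvd _ 2).2 h2

lemma sum_mul_eq_zero (hC : IsNRCode C) (h0 : 0 ∈ C) {o : ι} (hr : r ∈ hC.kernel h0 o)
    (hc : c ∈ C) : ∑ i, c i * r i = 0 := by
  rcases eq_or_ne r 0 with rfl | hr0
  · simp
  have hr0 := hC.signSum_eq_zero_of_mem_kernel h0 hr hr0
  have hval : signSum c + signSum r - signSum (r + c) = 16 - 4 * ∑ i, ((c i * r i).val : ℤ) := by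
    have hpoint : ∀ s t : ZMod 2, sgn s + sgn t - sgn (t + s) = 1 - 4 * (s * t).val := by decide
    simp only [signSum, ← Finset.sum_add_distrib, ← Finset.sum_sub_distrib, Pi.add_apply, hpoint]
    simp [Finset.sum_sub_distrib, Finset.mul_sum, hC.length]
  have h8 := hC.eight_dvd_signSum_add_signSum h0 hr.1 hc (by rwa [zero_add])
  have h4 := hC.four_dvd_signSum h0 hc
  rw [zero_add] at h4 h8
  have h2 : (2 : ℤ) ∣ ∑ i, ((c i * r i).val : ℤ) := by omega
  simpa using (ZMod.intCast_zmod_eq_zero_iff_dvd _ 2).2 h2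

end Orthogonality

section Transport

variable {ι κ : Type*} {C : Finset (ι → ZMod 2)}

lemma mem_map_arrowCongr {e : ι ≃ κ} {c : κ → ZMod 2} :
    c ∈ C.map (e.arrowCongr (.refl (ZMod 2))).toEmbedding ↔ c ∘ e ∈ C := by
  rw [Finset.mem_map_equiv]
  rfl

variable [Fintype ι] [Fintype κ]

lemma map_arrowCongr (hC : IsNRCode C) (e : ι ≃ κ) :
    IsNRCode (C.map (e.arrowCongr (.refl (ZMod 2))).toEmbedding) where
  length := by rw [← Fintype.card_congr e, hC.length]
  card := by rw [Finset.card_map, hC.card]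
  six_le_hammingDist x hx y hy hxy := by
    rw [← hammingDist_comp_equiv e]
    exact hC.six_le_hammingDist _ (mem_map_arrowCongr.1 hx) _ (mem_map_arrowCongr.1 hy)
      fun h => hxy (e.surjective.injective_comp_right h)
  even_hammingDist x hx y hy := by
    rw [← hammingDist_comp_equiv e]
    exact hC.even_hammingDist _ (mem_map_arrowCongr.1 hx) _ (mem_map_arrowCongr.1 hy)

end Transport

section BooleanFunctions

variable {C : Finset ((Fin 4 → ZMod 2) → ZMod 2)} {c : (Fin 4 → ZMod 2) → ZMod 2}

lemma add_affineFun_mem (hC : IsNRCode C) (h0 : 0 ∈ C)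
    (hcoord : ∀ k, (fun x => x k) ∈ hC.kernel h0 0) (hc : c ∈ C) (b : Fin 4 → ZMod 2)
    (e : ZMod 2) : c + affineFun b e ∈ C := by
  have hlinear : (fun x => b ⬝ᵥ x) ∈ hC.kernel h0 0 := by
    convert Submodule.sum_mem _ fun k (_ : k ∈ Finset.univ) =>
      Submodule.smul_mem _ (b k) (hcoord k) with x
    simp [dotProduct]
  have hmem := hC.add_mem_of_mem_kernel h0 hlinear hc
  have he : e = 0 ∨ e = 1 := by revert e; decide
  rcases he with rfl | rfl
  · convert hmem using 1
    ext x
    simp [affineFun, add_comm]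
  · convert hC.add_one_mem hmem using 1
    ext x
    simp [affineFun, add_left_comm, add_assoc]

lemma exists_quadForm_mem (hC : IsNRCode C) (h0 : 0 ∈ C)
    (hcoord : ∀ k, (fun x => x k) ∈ hC.kernel h0 0) (hc : c ∈ C) :
    ∃ a m b e, quadForm a m ∈ C ∧ c = quadForm a m + affineFun b e := by
  obtain ⟨a, m, b, e, rfl⟩ := exists_eq_quadForm_add_affineFun (hC.sum_apply_eq_zero h0 hc)
    fun k => hC.sum_mul_eq_zero h0 (hcoord k) hc
  refine ⟨a, m, b, e, ?_, rfl⟩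
  have hmem := hC.add_affineFun_mem h0 hcoord hc b e
  rwa [add_assoc, ZModModule.add_self, add_zero] at hmem

lemma isKerdockPair (hC : IsNRCode C) (h0 : 0 ∈ C)
    (hcoord : ∀ k, (fun x => x k) ∈ hC.kernel h0 0) {p q : (Fin 3 → ZMod 2) × (Fin 3 → ZMod 2)}
    (hp : quadForm p.1 p.2 ∈ C) (hq : quadForm q.1 q.2 ∈ C) : IsKerdockPair p q := by
  by_contra h
  obtain ⟨hpq, hsingular⟩ := not_or.1 h
  have hne : p.1 + q.1 ≠ 0 ∨ p.2 + q.2 ≠ 0 := by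
    contrapose! hpq
    simpa only [Prod.ext_iff, add_eq_zero_iff_eq_neg, ZModModule.neg_eq_self] using hpq
  have hzero : ∀ t : ZMod 2, t ≠ 1 → t = 0 := by decide
  obtain ⟨b, e, h8⟩ := exists_signSum_quadForm_add_eq_eight hne (hzero _ hsingular)
  rw [← quadForm_add, add_assoc] at h8
  have hcases := hC.signSum_cases hp (hC.add_affineFun_mem h0 hcoord hq b e)
  rw [← hC.signSum_eq_sixteen_iff, ← hC.signSum_eq_neg_sixteen_iff] at hcases
  omega

lemma eight_le_card_quadForm_mem (hC : IsNRCode C) (h0 : 0 ∈ C)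
    (hcoord : ∀ k, (fun x => x k) ∈ hC.kernel h0 0) :
    8 ≤ (Finset.univ.filter fun p : (Fin 3 → ZMod 2) × (Fin 3 → ZMod 2) =>
      quadForm p.1 p.2 ∈ C).card := by
  set Q := Finset.univ.filter fun p : (Fin 3 → ZMod 2) × (Fin 3 → ZMod 2) => quadForm p.1 p.2 ∈ C
  have hsub : C ⊆ (Q ×ˢ (Finset.univ : Finset ((Fin 4 → ZMod 2) × ZMod 2))).image
      fun p => quadForm p.1.1 p.1.2 + affineFun p.2.1 p.2.2 := fun c hc => by
    obtain ⟨a, m, b, e, hmem, rfl⟩ := hC.exists_quadForm_mem h0 hcoord hc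
    exact Finset.mem_image.2 ⟨((a, m), b, e), by simpa [Q] using hmem, rfl⟩
  have hcard := (Finset.card_le_card hsub).trans Finset.card_image_le
  have hcard_affine : (Finset.univ : Finset ((Fin 4 → ZMod 2) × ZMod 2)).card = 32 := rfl
  rw [hC.card, Finset.card_product, hcard_affine] at hcard
  omega

lemma exists_comp_shear_mem_iff (hC : IsNRCode C) (h0 : 0 ∈ C)
    (hcoord : ∀ k, (fun x => x k) ∈ hC.kernel h0 0) :
    ∃ k, ∀ c, c ∘ (shear k).symm ∈ C ↔ c ∈ normalCode := by
  obtain ⟨k, hk⟩ := exists_forall_eq_inversion (Q := Finset.univ.filter fun p =>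
      quadForm p.1 p.2 ∈ C) (by simpa [quadForm_zero] using h0)
    (fun p hp q hq => hC.isKerdockPair h0 hcoord (Finset.mem_filter.1 hp).2
      (Finset.mem_filter.1 hq).2) (hC.eight_le_card_quadForm_mem h0 hcoord)
  let C' := C.map ((shear k).toEquiv.symm.arrowCongr (.refl (ZMod 2))).toEmbedding
  have hmem : ∀ c, c ∈ C' ↔ c ∘ (shear k).symm ∈ C := fun c => mem_map_arrowCongr
  have hsub : C' ⊆ normalCode := fun c hc => by
    obtain ⟨a, m, b, e, hq, hcomp⟩ := hC.exists_quadForm_mem h0 hcoord ((hmem c).1 hc)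
    obtain ⟨b₁, hb₁⟩ := exists_quadForm_comp_shear a m k
    obtain ⟨b₂, hb₂⟩ := exists_affineFun_comp_shear b e k
    refine mem_normalCode.2 ⟨a + m ⨯₃ k, b₁ + b₂, 0 + e, ?_⟩
    calc quadForm (a + m ⨯₃ k) (inversion (a + m ⨯₃ k)) + affineFun (b₁ + b₂) (0 + e)
        = quadForm a m ∘ shear k + affineFun b e ∘ shear k := by
          rw [← hk (a, m) (by simpa using hq), ← affineFun_add, ← add_assoc, hb₁, hb₂]
      _ = (c ∘ (shear k).symm) ∘ shear k := by rw [hcomp]; rfl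
      _ = c := by ext x; simp
  have heq : C' = normalCode := Finset.eq_of_subset_of_card_le hsub <| by
    rw [Finset.card_map, hC.card]
    exact card_normalCode_le
  exact ⟨k, fun c => by rw [← hmem, heq]⟩

end BooleanFunctions

end IsNRCode

end NormalForm

section Frames

section LinearIndependence

variable {V : Type*} [AddCommGroup V] [Module (ZMod 2) V] {x y z : V}

lemma linearIndependent_pair_of_ne (hx : x ≠ 0) (hy : y ≠ 0) (hxy : x ≠ y) :
    LinearIndependent (ZMod 2) ![x, y] := by
  have hcases : ∀ t : ZMod 2, t = 0 ∨ t = 1 := by decide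
  refine LinearIndependent.pair_iff.2 fun s t h => ?_
  rcases hcases s with rfl | rfl <;> rcases hcases t with rfl | rfl <;>
    simp_all [add_eq_zero_iff_eq_neg, ZModModule.neg_eq_self]

lemma linearIndependent_triple_or_eq_add (hx : x ≠ 0) (hy : y ≠ 0) (hz : z ≠ 0) (hxy : x ≠ y)
    (hxz : x ≠ z) (hyz : y ≠ z) : LinearIndependent (ZMod 2) ![x, y, z] ∨ x = y + z := by
  have hcases : ∀ t : ZMod 2, t = 0 ∨ t = 1 := by decide
  refine or_iff_not_imp_right.2 fun hsum => linearIndependent_finCons.2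
    ⟨linearIndependent_pair_of_ne hy hz hyz, fun hspan => ?_⟩
  rw [Matrix.range_cons_cons_empty, Submodule.mem_span_pair] at hspan
  obtain ⟨s, t, rfl⟩ := hspan
  rcases hcases s with rfl | rfl <;> rcases hcases t with rfl | rfl <;> simp_all

end LinearIndependence

namespace IsNRCode

variable {ι : Type*} [Fintype ι] {C : Finset (ι → ZMod 2)}

lemma exists_equiv_normalCode (hC : IsNRCode C) (h0 : 0 ∈ C) (o : ι) {d : ℕ} (hd : d ≤ 3)
    {v : Fin d → ι} (hv : LinearIndependent (ZMod 2) (coordDual (hC.kernel h0 o) ∘ v)) :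
    ∃ φ : ι ≃ (Fin 4 → ZMod 2), φ o = 0 ∧
      (∀ i, φ (v i) = Pi.single (Fin.castLE (hd.trans (Nat.le_succ 3)) i) 1) ∧
      (∀ i j k, coordDual (hC.kernel h0 o) i = coordDual _ j + coordDual _ k → φ i = φ j + φ k) ∧
      ∀ c, c ∘ φ ∈ C ↔ c ∈ normalCode := by
  obtain ⟨L, hL, hcoord⟩ := hC.exists_coordinates h0 o (hd.trans (Nat.le_succ 3)) hv
  let ψ := (Equiv.ofBijective _ (hC.coordDual_kernel_bijective h0 o)).trans L.toEquiv
  have hψ : ∀ i, ψ i = L (coordDual _ i) := fun _ => rfl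
  have hψo : ψ o = 0 := by
    rw [hψ, show coordDual (hC.kernel h0 o) o = 0 from LinearMap.ext fun w => w.2.2.2, map_zero]
  have h0ψ : 0 ∈ C.map (ψ.arrowCongr (.refl (ZMod 2))).toEmbedding := mem_map_arrowCongr.2 h0
  obtain ⟨k, hk⟩ := (hC.map_arrowCongr ψ).exists_comp_shear_mem_iff h0ψ fun k =>
    ⟨mem_map_arrowCongr.2 (hcoord k).1, signSum_comp_equiv ψ (fun x => x k) ▸ (hcoord k).2.1, rfl⟩
  refine ⟨ψ.trans (shear k).symm.toEquiv, ?_, fun i => ?_, fun i j l h => ?_, fun c => ?_⟩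
  · simp [hψo]
  · have hi : Fin.castLE (hd.trans (Nat.le_succ 3)) i ≠ 3 :=
      Fin.ne_of_val_ne (show (i : ℕ) ≠ 3 by omega)
    simp [hψ, hL, LinearEquiv.symm_apply_eq, shear_apply, hi.symm]
  · simp [hψ, h]
  · rw [← hk, mem_map_arrowCongr]
    rfl

end IsNRCode

end Frames

section Leaders

/-- The supports, in `normalCode` coordinates, of the words of weight at most three that have weight
equal to their distance from the code. All of them vanish at the coordinate `0`. -/
def leaders : ℕ → Finset (Fin 4 → ZMod 2)
  | 0 => ∅
  | 1 => {Pi.single 0 1}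
  | 2 => {Pi.single 0 1, Pi.single 1 1}
  | _ => {Pi.single 0 1 + Pi.single 1 1, Pi.single 0 1, Pi.single 1 1}

lemma exists_mem_normalCode_apply_eq_one : ∃ c ∈ normalCode, signSum c = 4 ∧ c 0 = 1 ∧
    c (Pi.single 0 1) = 1 ∧ c (Pi.single 1 1) = 1 ∧ c (Pi.single 2 1) = 1 := by
  refine ⟨quadForm 1 (inversion 1) + affineFun 0 1, mem_normalCode.2 ⟨1, 0, 1, rfl⟩, ?_⟩
  rw [signSum_fin_four]
  decide

variable {κ : Type*} [Fintype κ] {w z : κ → ZMod 2}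

lemma signSum_option (z : Option κ → ZMod 2) : signSum z = sgn (z none) + signSum (z ∘ some) :=
  Fintype.sum_option _

lemma signSum_add_of_forall_eq_one (h : ∀ i, w i ≠ 0 → z i = 1) :
    signSum (w + z) = signSum z + 2 * hammingNorm w := by
  have hpoint : ∀ s t : ZMod 2, (s ≠ 0 → t = 1) →
      sgn (s + t) = sgn t + 2 * if s ≠ 0 then 1 else 0 := by decide
  simp only [signSum, Pi.add_apply, hpoint _ _ (h _), Finset.sum_add_distrib, ← Finset.mul_sum,
    Finset.sum_boole, hammingNorm]

namespace IsNRCode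

variable {C : Finset (Option κ → ZMod 2)} {i j k : κ}

lemma coordDual_some_ne_zero (hC : IsNRCode C) (h0 : 0 ∈ C) (i : κ) :
    coordDual (hC.kernel h0 none) (some i) ≠ 0 := fun h =>
  Option.some_ne_none i <| (hC.coordDual_kernel_bijective h0 none).1 <|
    h.trans (LinearMap.ext fun r => r.2.2.2).symm

lemma coordDual_some_ne (hC : IsNRCode C) (h0 : 0 ∈ C) (hij : i ≠ j) :
    coordDual (hC.kernel h0 none) (some i) ≠ coordDual _ (some j) :=
  (hC.coordDual_kernel_bijective h0 none).1.ne ((Option.some_injective κ).ne hij)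

lemma linearIndependent_coordDual_pair (hC : IsNRCode C) (h0 : 0 ∈ C) (hij : i ≠ j) :
    LinearIndependent (ZMod 2) (coordDual (hC.kernel h0 none) ∘ ![some i, some j]) := by
  rw [← FinVec.map_eq]
  exact linearIndependent_pair_of_ne
    (hC.coordDual_some_ne_zero h0 i) (hC.coordDual_some_ne_zero h0 j) (hC.coordDual_some_ne h0 hij)

lemma not_linearIndependent_coordDual (hC : IsNRCode C) (h0 : 0 ∈ C)
    (hw : ∀ c ∈ C, hammingNorm w ≤ hammingDist w (c ∘ some)) (hw3 : hammingNorm w = 3)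
    (hS : ∀ l, w l ≠ 0 ↔ l = i ∨ l = j ∨ l = k) :
    ¬ LinearIndependent (ZMod 2)
      (coordDual (hC.kernel h0 none) ∘ ![some i, some j, some k]) := fun hv => by
  obtain ⟨φ, hφ0, hφ, -, hmem⟩ := hC.exists_equiv_normalCode h0 none le_rfl hv
  obtain ⟨c, hc, hsum, hc0, hci, hcj, hck⟩ := exists_mem_normalCode_apply_eq_one
  have hone : ∀ l, w l ≠ 0 → (c ∘ φ) (some l) = 1 := by
    intro l hl
    rcases (hS l).1 hl with rfl | rfl | rfl
    · simpa using (congrArg c (hφ 0)).trans hci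
    · simpa using (congrArg c (hφ 1)).trans hcj
    · simpa using (congrArg c (hφ 2)).trans hck
  have hlength : Fintype.card κ = 15 := by simpa using hC.length
  have hnone : (c ∘ φ) none = 1 := by rw [Function.comp_apply, hφ0, hc0]
  have hdist := hw _ ((hmem c).2 hc)
  have hsumφ := signSum_option (c ∘ φ)
  have hadd := signSum_add_of_forall_eq_one (z := (c ∘ φ) ∘ some) hone
  rw [signSum_comp_equiv, hsum, hnone, sgn_one] at hsumφ
  rw [signSum_add_eq_card_sub, hlength, hw3] at hadd
  omega

lemma exists_coordDual_eq_add (hC : IsNRCode C) (h0 : 0 ∈ C)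
    (hw : ∀ c ∈ C, hammingNorm w ≤ hammingDist w (c ∘ some)) (hw3 : hammingNorm w = 3) :
    ∃ i j k, j ≠ k ∧ (∀ l, w l ≠ 0 ↔ l = i ∨ l = j ∨ l = k) ∧
      coordDual (hC.kernel h0 none) (some i) = coordDual _ (some j) + coordDual _ (some k) := by
  classical
  obtain ⟨i, j, k, hij, hik, hjk, hS⟩ := Finset.card_eq_three.1 hw3
  have hsupp : ∀ l, w l ≠ 0 ↔ l = i ∨ l = j ∨ l = k := by
    simpa [Finset.ext_iff] using hS
  refine ⟨i, j, k, hjk, hsupp, (linearIndependent_triple_or_eq_add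
    (hC.coordDual_some_ne_zero h0 i) (hC.coordDual_some_ne_zero h0 j)
    (hC.coordDual_some_ne_zero h0 k) (hC.coordDual_some_ne h0 hij) (hC.coordDual_some_ne h0 hik)
    (hC.coordDual_some_ne h0 hjk)).resolve_left fun hv => ?_⟩
  refine hC.not_linearIndependent_coordDual h0 hw hw3 hsupp ?_
  rw [← FinVec.map_eq]
  exact hv

lemma exists_equiv_leaders (hC : IsNRCode C) (h0 : 0 ∈ C)
    (hw : ∀ c ∈ C, hammingNorm w ≤ hammingDist w (c ∘ some)) (hw3 : hammingNorm w ≤ 3) :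
    ∃ φ : Option κ ≃ (Fin 4 → ZMod 2), φ none = 0 ∧
      (∀ l, φ (some l) ∈ leaders (hammingNorm w) ↔ w l ≠ 0) ∧ ∀ c, c ∘ φ ∈ C ↔ c ∈ normalCode := by
  classical
  obtain hd | hd | hd | hd : hammingNorm w = 0 ∨ hammingNorm w = 1 ∨ hammingNorm w = 2 ∨
    hammingNorm w = 3 := by omega
  · obtain ⟨φ, hφ0, -, -, hmem⟩ := hC.exists_equiv_normalCode h0 none (v := ![]) (Nat.zero_le 3)
      linearIndependent_empty_type
    obtain rfl := hammingNorm_eq_zero.1 hd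
    exact ⟨φ, hφ0, fun l => by simp [leaders], hmem⟩
  · obtain ⟨i, hS⟩ := Finset.card_eq_one.1 hd
    have hsupp : ∀ l, w l ≠ 0 ↔ l = i := by simpa [Finset.ext_iff] using hS
    obtain ⟨φ, hφ0, hφ, -, hmem⟩ := hC.exists_equiv_normalCode h0 none (v := ![some i])
      (by norm_num) (linearIndependent_unique_iff.2 (hC.coordDual_some_ne_zero h0 i))
    have hi : φ (some i) = Pi.single 0 1 := hφ 0
    exact ⟨φ, hφ0, fun l => by simp [hd, leaders, ← hi, hsupp], hmem⟩
  · obtain ⟨i, j, hij, hS⟩ := Finset.card_eq_two.1 hd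
    have hsupp : ∀ l, w l ≠ 0 ↔ l = i ∨ l = j := by simpa [Finset.ext_iff] using hS
    obtain ⟨φ, hφ0, hφ, -, hmem⟩ := hC.exists_equiv_normalCode h0 none (by norm_num)
      (hC.linearIndependent_coordDual_pair h0 hij)
    have hi : φ (some i) = Pi.single 0 1 := hφ 0
    have hj : φ (some j) = Pi.single 1 1 := hφ 1
    exact ⟨φ, hφ0, fun l => by simp [hd, leaders, ← hi, ← hj, hsupp], hmem⟩
  · obtain ⟨i, j, k, hjk, hsupp, hijk⟩ := hC.exists_coordDual_eq_add h0 hw hd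
    obtain ⟨φ, hφ0, hφ, hadd, hmem⟩ := hC.exists_equiv_normalCode h0 none (by norm_num)
      (hC.linearIndependent_coordDual_pair h0 hjk)
    have hi := hadd _ _ _ hijk
    have hj : φ (some j) = Pi.single 0 1 := hφ 0
    have hk : φ (some k) = Pi.single 1 1 := hφ 1
    exact ⟨φ, hφ0, fun l => by simp [hd, leaders, ← hj, ← hk, ← hi, hsupp], hmem⟩

end IsNRCode

end Leaders

section PuncturedCodes

variable {κ : Type*} [Fintype κ]

/-- The extension of a word by a parity bit at the new coordinate `none`. -/
def parityExtend (z : κ → ZMod 2) : Option κ → ZMod 2 := fun o => o.elim (∑ i, z i) z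

lemma parityExtend_comp_some (z : κ → ZMod 2) : parityExtend z ∘ some = z := rfl

lemma parityExtend_injective : Function.Injective (parityExtend (κ := κ)) :=
  Function.LeftInverse.injective (g := (· ∘ some)) parityExtend_comp_some

lemma parityExtend_comp_optionCongr (z : κ → ZMod 2) (π : κ ≃ κ) :
    parityExtend z ∘ Equiv.optionCongr π = parityExtend (z ∘ π) := by
  funext o
  cases o with
  | none => exact (Equiv.sum_comp π z).symm
  | some i => rfl

lemma hammingDist_add_right {ι G : Type*} [Fintype ι] [DecidableEq G] [AddGroup G]
    (x y z : ι → G) : hammingDist (x + z) (y + z) = hammingDist x y :=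
  hammingDist_comp (fun i => (· + z i)) fun i => add_left_injective (z i)

lemma hammingDist_comp_some_le (x y : Option κ → ZMod 2) :
    hammingDist (x ∘ some) (y ∘ some) ≤ hammingDist x y :=
  Finset.card_le_card_of_injOn some (fun i hi => by simpa using hi) (Option.some_injective κ).injOn

lemma cast_hammingDist (x y : κ → ZMod 2) : (hammingDist x y : ZMod 2) = ∑ i, x i + ∑ i, y i := by
  have hpoint : ∀ s t : ZMod 2, (if s ≠ t then 1 else 0) = s + t := by decide
  simp only [hammingDist, Finset.card_filter, Nat.cast_sum, Nat.cast_ite, Nat.cast_one,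
    Nat.cast_zero, hpoint, Finset.sum_add_distrib]

lemma sum_parityExtend (z : κ → ZMod 2) : ∑ o, parityExtend z o = 0 := by
  simp [parityExtend, Fintype.sum_option, ZModModule.add_self]

lemma optionCongr_removeNone {α β : Type*} {e : Option α ≃ Option β} (he : e none = none) :
    Equiv.optionCongr (Equiv.removeNone e) = e := by
  ext1 o
  cases o with
  | none => exact he.symm
  | some a =>
    refine Equiv.removeNone_some e (Option.ne_none_iff_exists'.1 fun h => ?_)
    exact Option.some_ne_none a (e.injective (h.trans he.symm))

/-- The binary codes with the parameters `(15, 256, 5)` of the punctured Nordstrom-Robinson code.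
The distance `5` need not be attained. -/
structure IsPuncturedNRCode (D : Finset (κ → ZMod 2)) : Prop where
  length : Fintype.card κ = 15
  card : D.card = 256
  five_le_hammingDist : ∀ x ∈ D, ∀ y ∈ D, x ≠ y → 5 ≤ hammingDist x y

namespace IsPuncturedNRCode

variable {D : Finset (κ → ZMod 2)} {c c' x x' : κ → ZMod 2}

lemma map_addRight (hD : IsPuncturedNRCode D) (c : κ → ZMod 2) :
    IsPuncturedNRCode (D.map (Equiv.addRight c).toEmbedding) where
  length := hD.length
  card := by rw [Finset.card_map, hD.card]
  five_le_hammingDist := by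
    simp only [Finset.forall_mem_map, Equiv.coe_toEmbedding, Equiv.coe_addRight]
    intro x hx y hy hxy
    rw [hammingDist_add_right]
    exact hD.five_le_hammingDist x hx y hy fun h => hxy (congrArg (· + c) h)

lemma isNRCode_map_parityExtend (hD : IsPuncturedNRCode D) :
    IsNRCode (D.map ⟨parityExtend, parityExtend_injective⟩) := by
  have heven : ∀ x y : κ → ZMod 2, Even (hammingDist (parityExtend x) (parityExtend y)) :=
    fun x y => by
      rw [← ZMod.natCast_eq_zero_iff_even, cast_hammingDist, sum_parityExtend, sum_parityExtend,
        add_zero]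
  refine ⟨by rw [Fintype.card_option, hD.length], by rw [Finset.card_map, hD.card], ?_, ?_⟩
  · simp only [Finset.forall_mem_map, Function.Embedding.coeFn_mk]
    intro x hx y hy hxy
    have h5 := hD.five_le_hammingDist x hx y hy fun h => hxy (congrArg parityExtend h)
    have hle := hammingDist_comp_some_le (parityExtend x) (parityExtend y)
    rw [parityExtend_comp_some, parityExtend_comp_some] at hle
    obtain ⟨n, hn⟩ := heven x y
    omega
  · simp only [Finset.forall_mem_map, Function.Embedding.coeFn_mk]
    exact fun x _ y _ => heven x y

-- The parity bit of `x` is flipped, so that the extended word has odd distances to the extended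
-- code.
lemma exists_hammingDist_le_three (hD : IsPuncturedNRCode D) (x : κ → ZMod 2) :
    ∃ c ∈ D, hammingDist x c ≤ 3 := by
  classical
  let z := parityExtend x + Pi.single none 1
  have hsum : ∑ o, z o = 1 := by
    simp only [z, Pi.add_apply, Finset.sum_add_distrib, sum_parityExtend, Finset.sum_pi_single',
      Finset.mem_univ, if_true, zero_add]
  have hdist : ∀ c, signSum (z + parityExtend c) = 16 - 2 * hammingDist z (parityExtend c) :=
    fun c => by rw [signSum_add_eq_card_sub, hD.isNRCode_map_parityExtend.length, Nat.cast_ofNat]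
  have hmod : ∀ c, signSum (z + parityExtend c) % 4 = 2 := fun c => by
    have hodd : Odd (hammingDist z (parityExtend c)) := by
      rw [← ZMod.natCast_eq_one_iff_odd, cast_hammingDist, hsum, sum_parityExtend, add_zero]
    obtain ⟨n, hn⟩ := hodd
    rw [hdist, hn]
    omega
  obtain ⟨e, he, h10⟩ := hD.isNRCode_map_parityExtend.exists_ten_le_signSum (x := z) <|
    Finset.forall_mem_map.2 fun c _ => hmod c
  obtain ⟨c, hc, rfl⟩ := Finset.mem_map.1 he
  have hsome : z ∘ some = x := by
    ext i
    simp [z, parityExtend]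
  have hle := hammingDist_comp_some_le z (parityExtend c)
  rw [hsome, parityExtend_comp_some] at hle
  rw [Function.Embedding.coeFn_mk, hdist] at h10
  exact ⟨c, hc, by omega⟩

lemma exists_equiv_leaders (hD : IsPuncturedNRCode D) (hc : c ∈ D)
    (hx : ∀ z ∈ D, hammingDist x c ≤ hammingDist x z) :
    ∃ φ : Option κ ≃ (Fin 4 → ZMod 2), φ none = 0 ∧
      (∀ l, φ (some l) ∈ leaders (hammingDist x c) ↔ (x + c) l ≠ 0) ∧
        ∀ z, parityExtend (z + c) ∘ φ.symm ∈ normalCode ↔ z ∈ D := by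
  have hC := (hD.map_addRight c).isNRCode_map_parityExtend
  set C := (D.map (Equiv.addRight c).toEmbedding).map ⟨parityExtend, parityExtend_injective⟩
  have hmem : ∀ z, parityExtend (z + c) ∈ C ↔ z ∈ D := fun z => by simp [C]
  have h0 : 0 ∈ C := by
    have hzero : parityExtend (0 : κ → ZMod 2) = 0 := by
      ext o
      cases o <;> simp [parityExtend]
    rw [← hzero, ← ZModModule.add_self c]
    exact (hmem c).2 hc
  have hw : ∀ e ∈ C, hammingNorm (x + c) ≤ hammingDist (x + c) (e ∘ some) := by
    simp only [C, Finset.forall_mem_map, Function.Embedding.coeFn_mk, parityExtend_comp_some,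
      Equiv.coe_addRight]
    intro z hz
    rw [hammingDist_add_right, ← hammingDist_eq_hammingNorm_add]
    exact hx z hz
  obtain ⟨e, he, he3⟩ := hD.exists_hammingDist_le_three x
  have hx3 := (hx e he).trans he3
  rw [hammingDist_eq_hammingNorm_add] at hx3 ⊢
  obtain ⟨φ, hφ0, hφ, hφmem⟩ := hC.exists_equiv_leaders h0 hw hx3
  refine ⟨φ, hφ0, hφ, fun z => ?_⟩
  rw [← hφmem, ← hmem, Function.comp_assoc, φ.symm_comp_self, Function.comp_id]

lemma exists_perm (hD : IsPuncturedNRCode D) (hc : c ∈ D) (hc' : c' ∈ D)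
    (hx : ∀ z ∈ D, hammingDist x c ≤ hammingDist x z)
    (hx' : ∀ z ∈ D, hammingDist x' c' ≤ hammingDist x' z)
    (hxx' : hammingDist x c = hammingDist x' c') :
    ∃ π : Equiv.Perm κ, (x + c) ∘ π.symm + c' = x' ∧ ∀ z, (z + c) ∘ π.symm + c' ∈ D ↔ z ∈ D := by
  obtain ⟨φ, hφ0, hφ, hφmem⟩ := hD.exists_equiv_leaders hc hx
  obtain ⟨φ', hφ'0, hφ', hφ'mem⟩ := hD.exists_equiv_leaders hc' hx'
  have hnone : (φ.trans φ'.symm) none = none := φ'.symm_apply_eq.2 (hφ0.trans hφ'0.symm)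
  let π := Equiv.removeNone (φ.trans φ'.symm)
  have hπ : ∀ o, φ (Equiv.optionCongr π.symm o) = φ' o := fun o => by
    rw [Equiv.optionCongr_symm, optionCongr_removeNone hnone]
    simp
  have hw : (x + c) ∘ π.symm = x' + c' := by
    ext1 l
    have heq_of_iff : ∀ s t : ZMod 2, (s ≠ 0 ↔ t ≠ 0) → s = t := by decide
    refine heq_of_iff _ _ ?_
    rw [Function.comp_apply, ← hφ, ← hφ', hxx', ← hπ]
    rfl
  have hcancel : ∀ z, z + c' + c' = z := fun z => by
    rw [add_assoc, ZModModule.add_self, add_zero]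
  have hsymm : Equiv.optionCongr π.symm ∘ φ'.symm = φ.symm := by
    ext1 v
    rw [Function.comp_apply, ← φ.symm_apply_apply (Equiv.optionCongr _ _), hπ,
      φ'.apply_symm_apply]
  refine ⟨π, by rw [hw, hcancel], fun z => ?_⟩
  rw [← hφ'mem, ← hφmem, hcancel, ← parityExtend_comp_optionCongr, Function.comp_assoc, hsymm]

end IsPuncturedNRCode

end PuncturedCodes

section CompleteTransitivity

variable {m : ℕ} {C : Set (Fin m → ZMod 2)} {g : Equiv.Perm (Fin m → ZMod 2)}

lemma distToCode_le {c : Fin m → ZMod 2} (hc : c ∈ C) (x : Fin m → ZMod 2) :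
    distToCode C x ≤ hammingDist x c :=
  Nat.sInf_le ⟨c, hc, rfl⟩

lemma exists_hammingDist_eq_distToCode (hC : C.Nonempty) (x : Fin m → ZMod 2) :
    ∃ c ∈ C, hammingDist x c = distToCode C x :=
  Nat.sInf_mem (s := {d | ∃ c ∈ C, hammingDist x c = d}) (hC.elim fun c hc => ⟨_, c, hc, rfl⟩)

/-- The automorphism group of the binary Hamming graph. -/
def hammingAutGroup (m : ℕ) : Subgroup (Equiv.Perm (Fin m → ZMod 2)) where
  carrier := {g | IsHammingAut g}
  one_mem' := ⟨1, 0, fun x => (add_zero x).symm⟩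
  mul_mem' := by
    rintro g h ⟨σ, u, hg⟩ ⟨τ, v, hh⟩
    refine ⟨σ * τ, (fun i => v (σ.symm i)) + u, fun x => ?_⟩
    rw [Equiv.Perm.mul_apply, hg, hh, ← add_assoc]
    rfl
  inv_mem' := by
    rintro g ⟨σ, v, hg⟩
    refine ⟨σ.symm, fun i => v (σ i), fun x => ?_⟩
    rw [Equiv.Perm.inv_eq_iff_eq, hg]
    ext i
    simp [add_assoc, ZModModule.add_self]

lemma hammingDist_map_of_isHammingAut (hg : IsHammingAut g) (x y : Fin m → ZMod 2) :
    hammingDist (g x) (g y) = hammingDist x y := by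
  obtain ⟨σ, v, hg⟩ := hg
  rw [hg, hg, hammingDist_add_right]
  exact hammingDist_comp_equiv σ.symm x y

lemma distToCode_map_of_isHammingAut (hg : IsHammingAut g) (hgC : g '' C = C)
    (x : Fin m → ZMod 2) : distToCode C (g x) = distToCode C x := by
  rw [distToCode, ← hgC]
  simp only [exists_mem_image, hammingDist_map_of_isHammingAut hg]
  rw [hgC, distToCode]

open scoped Pointwise in
lemma isCompletelyTransitive_of_forall_exists
    (h : ∀ x y, distToCode C x = distToCode C y →
      ∃ g, IsHammingAut g ∧ (∀ z, g z ∈ C ↔ z ∈ C) ∧ g x = y) :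
    IsCompletelyTransitive C := by
  refine ⟨hammingAutGroup m ⊓ MulAction.stabilizer _ C, fun g hg => hg, ?_⟩
  rintro _ x rfl
  ext y
  constructor
  · intro hy
    obtain ⟨g, hg, hmem, rfl⟩ := h x y hy.symm
    have hgC : g '' C = C := by
      ext z
      rw [mem_image_equiv, ← hmem, g.apply_symm_apply]
    exact ⟨g, ⟨hg, hgC⟩, rfl⟩
  · rintro ⟨g, ⟨hg, hgC⟩, rfl⟩
    exact distToCode_map_of_isHammingAut hg hgC x

lemma isHammingAut_addRight_trans_arrowCongr (π : Equiv.Perm (Fin m)) (c c' : Fin m → ZMod 2) :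
    IsHammingAut ((Equiv.addRight c).trans ((π.arrowCongr (.refl _)).trans (Equiv.addRight c'))) :=
  ⟨π, c ∘ π.symm + c', fun x => add_assoc (x ∘ π.symm) (c ∘ π.symm) c'⟩

end CompleteTransitivity

end NordstromRobinson

/-- Every binary `(15, 256, 5)` code is completely transitive; in particular the
punctured Nordstrom-Robinson code is completely transitive. -/
theorem stmt_10 (C : Set (Fin 15 → ZMod 2)) (hcard : C.ncard = 256)
    (hd : IsMinDist C 5) :
    IsCompletelyTransitive C := by
  classical
  obtain ⟨D, rfl⟩ := (Set.finite_of_ncard_ne_zero (by rw [hcard]; norm_num)).exists_finset_coe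
  rw [Set.ncard_coe_finset] at hcard
  have hD : NordstromRobinson.IsPuncturedNRCode D := ⟨Fintype.card_fin 15, hcard, hd.1⟩
  have hne : (D : Set (Fin 15 → ZMod 2)).Nonempty := hd.2.imp fun _ h => h.1
  refine NordstromRobinson.isCompletelyTransitive_of_forall_exists fun x x' hxx' => ?_
  obtain ⟨c, hc, hxc⟩ := NordstromRobinson.exists_hammingDist_eq_distToCode hne x
  obtain ⟨c', hc', hxc'⟩ := NordstromRobinson.exists_hammingDist_eq_distToCode hne x'
  obtain ⟨π, hπ, hmem⟩ := hD.exists_perm hc hc'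
    (fun z hz => hxc.trans_le (NordstromRobinson.distToCode_le hz x))
    (fun z hz => hxc'.trans_le (NordstromRobinson.distToCode_le hz x'))
    (by rw [hxc, hxc', hxx'])
  exact ⟨_, NordstromRobinson.isHammingAut_addRight_trans_arrowCongr π c c', hmem, hπ⟩
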